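/- arXiv:1509.05905 — 3 statements merged into one kernel-verified Lean document; each statement's English description precedes it below -/
import Mathlib

section
/- Let n ≥ 2, let U ⊆ ℝ^n be an open set, and let f : U → ℝ be a function. Assume that for all vectors a, v, w ∈ ℝ^n with v and w linearly independent, the function (s,t) ↦ f(a + s·v + t·w) is real-analytic on the open set {(s,t) ∈ ℝ² : a + s·v + t·w ∈ U}. Then f is real-analytic on U. (Theorem 8.3, Bochnak–Siciak.) -/
/-!
Let `Pₖ x` be the `k`-th Taylor coefficient of `t ↦ f (a + t • x)` at `0`. Analyticity on planes
makes `Pₖ` a binary form of degree `k` on every plane through the origin, and Lagrange interpolation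
in one coordinate at a time then shows that `Pₖ` is a polynomial on the whole space. Analyticity on
lines bounds `‖Pₖ x‖` by a geometric sequence for each `x`; Baire's theorem makes this bound uniform
on some ball, Chebyshev's bound on leading coefficients moves the ball to the origin, and the
polarization identity turns the `Pₖ` into a power series of positive radius. Its sum agrees with `f`
near `a` because both are analytic on the lines through `a`.
-/

open Filter Finset Topology
open scoped ContDiff Nat

section Multilinear

theorem sum_neg_one_pow_card_compl_of_forall_mem {ι κ : Type*} [Fintype κ] [DecidableEq κ]
    (r : ι → κ) [DecidablePred fun S : Finset κ => ∀ i, r i ∈ S] [Decidable r.Surjective] :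
    ∑ S : Finset κ with ∀ i, r i ∈ S, (-1 : ℤ) ^ #Sᶜ = if r.Surjective then 1 else 0 := by
  classical
  let unhit : Finset κ := {j | ∀ i, r i ≠ j}
  have unhit_eq_empty : unhit = ∅ ↔ r.Surjective := by
    simp [unhit, Finset.filter_eq_empty_iff, Function.Surjective]
  calc ∑ S : Finset κ with ∀ i, r i ∈ S, (-1 : ℤ) ^ #Sᶜ
      = ∑ T ∈ unhit.powerset, (-1 : ℤ) ^ #T := by
        refine sum_bij' (fun S _ => Sᶜ) (fun T _ => Tᶜ) ?_ ?_ (by simp) (by simp) (by simp)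
        · intro S hS
          simp only [mem_filter_univ] at hS
          simp only [unhit, mem_powerset, subset_iff, mem_filter_univ, mem_compl]
          exact fun j hj i hij => hj (hij ▸ hS i)
        · intro T hT
          simp only [unhit, mem_powerset, subset_iff, mem_filter_univ] at hT
          simp only [mem_filter_univ, mem_compl]
          exact fun i hi => hT hi i rfl
    _ = if r.Surjective then 1 else 0 := by
        simp only [sum_powerset_neg_one_pow_card, unhit_eq_empty]

theorem card_factorial_smul_eq_sum_neg_one_pow_smul_diag {R ι E F : Type*} [Semiring R]
    [AddCommMonoid E] [Module R E] [AddCommGroup F] [Module R F] [Fintype ι] [DecidableEq ι]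
    (M : MultilinearMap R (fun _ : ι => E) F)
    (hM : ∀ (x : ι → E) (σ : Equiv.Perm ι), M (x ∘ σ) = M x) (x : ι → E) :
    (Fintype.card ι)! • M x =
      ∑ S : Finset ι, (-1 : ℤ) ^ #Sᶜ • M (fun _ => ∑ i ∈ S, x i) := by
  classical
  have expand (S : Finset ι) : M (fun _ => ∑ i ∈ S, x i) =
      ∑ r : ι → ι with ∀ i, r i ∈ S, M (x ∘ r) := by
    rw [M.map_sum_finset (fun _ j => x j) (fun _ => S)]
    exact sum_congr (by ext r; simp) fun _ _ => rfl
  symm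
  calc ∑ S : Finset ι, (-1 : ℤ) ^ #Sᶜ • M (fun _ => ∑ i ∈ S, x i)
      = ∑ r : ι → ι, (∑ S : Finset ι with ∀ i, r i ∈ S, (-1 : ℤ) ^ #Sᶜ) • M (x ∘ r) := by
        simp only [expand, smul_sum, sum_smul]
        exact sum_comm' (by simp)
    _ = ∑ r : ι → ι with r.Bijective, M (x ∘ r) := by
        rw [sum_filter]
        simp only [sum_neg_one_pow_card_compl_of_forall_mem, Finite.surjective_iff_bijective,
          ite_smul, one_smul, zero_smul]
    _ = ∑ r : ι → ι with r.Bijective, M x :=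
        sum_congr rfl fun r hr => hM x (Equiv.ofBijective r (mem_filter_univ r |>.mp hr))
    _ = (Fintype.card ι)! • M x := by
        rw [sum_const, ← Fintype.card_subtype, Fintype.card_congr Equiv.bijectiveEquiv,
          Fintype.card_perm]

theorem exists_diag_smul_add_smul_eq_sum {R E F : Type*} [CommSemiring R] [AddCommMonoid E]
    [Module R E] [AddCommMonoid F] [Module R F] {k : ℕ}
    (M : MultilinearMap R (fun _ : Fin k => E) F) (v w : E) :
    ∃ c : ℕ → F, ∀ s t : R,
      M (fun _ => s • v + t • w) = ∑ j ∈ range (k + 1), (s ^ (k - j) * t ^ j) • c j := by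
  refine ⟨fun j => ∑ S ∈ powersetCard j univ, M (S.piecewise (fun _ => w) fun _ => v),
    fun s t => ?_⟩
  have pull_out (S : Finset (Fin k)) :
      M (S.piecewise (fun _ => t • w) fun _ => s • v) =
        (s ^ (k - #S) * t ^ #S) • M (S.piecewise (fun _ => w) fun _ => v) := by
    have scale : S.piecewise (fun _ => t • w) (fun _ => s • v) =
        fun i => S.piecewise (fun _ => t) (fun _ => s) i •
          S.piecewise (fun _ => w) (fun _ => v) i := by
      funext i
      by_cases hi : i ∈ S <;> simp [hi]
    rw [scale, M.map_smul_univ, prod_piecewise]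
    simp [card_sdiff, mul_comm]
  have split : (fun _ : Fin k => s • v + t • w) = (fun _ => t • w) + fun _ => s • v := by
    funext; exact add_comm _ _
  rw [split, M.map_add_univ, ← powerset_univ, sum_powerset, card_fin]
  refine sum_congr rfl fun j _ => ?_
  rw [smul_sum]
  refine sum_congr rfl fun S hS => ?_
  rw [pull_out, mem_powersetCard_univ.mp hS]

end Multilinear

section MultilinearNorm

variable {ι F : Type*} [Fintype ι] [NormedAddCommGroup F] [NormedSpace ℝ F]

theorem norm_smul_norm_inv_smul {E : Type*} [NormedAddCommGroup E] [NormedSpace ℝ E] (x : E) :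
    ‖x‖ • ‖x‖⁻¹ • x = x := by
  rcases eq_or_ne x 0 with rfl | hx
  · simp
  · exact smul_inv_smul₀ (norm_ne_zero_iff.mpr hx) x

theorem opNorm_le_of_forall_norm_le_one {E : ι → Type*} [∀ i, NormedAddCommGroup (E i)]
    [∀ i, NormedSpace ℝ (E i)] (M : ContinuousMultilinearMap ℝ E F) {C : ℝ}
    (hM : ∀ x, (∀ i, ‖x i‖ ≤ 1) → ‖M x‖ ≤ C) : ‖M‖ ≤ C := by
  have hC : 0 ≤ C := (norm_nonneg _).trans (hM 0 (by simp))
  refine M.opNorm_le_bound hC fun x => ?_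
  calc ‖M x‖ = ‖M fun i => ‖x i‖ • ‖x i‖⁻¹ • x i‖ := by simp only [norm_smul_norm_inv_smul]
    _ = (∏ i, ‖x i‖) * ‖M fun i => ‖x i‖⁻¹ • x i‖ := by
        rw [M.map_smul_univ (fun i => ‖x i‖), norm_smul, Real.norm_of_nonneg (by positivity)]
    _ ≤ (∏ i, ‖x i‖) * C := by
        gcongr
        refine hM _ fun i => ?_
        rw [norm_smul, norm_inv, norm_norm]
        exact inv_mul_le_one
    _ = C * ∏ i, ‖x i‖ := mul_comm _ _

theorem opNorm_le_of_symmetric_of_norm_diag_le {E : Type*} [NormedAddCommGroup E] [NormedSpace ℝ E]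
    (M : ContinuousMultilinearMap ℝ (fun _ : ι => E) F)
    (hM : ∀ (x : ι → E) (σ : Equiv.Perm ι), M (x ∘ σ) = M x) {A : ℝ} (hA : 0 ≤ A)
    (hdiag : ∀ x : E, ‖M fun _ => x‖ ≤ A * ‖x‖ ^ Fintype.card ι) :
    ‖M‖ ≤ A * (2 * Real.exp 1) ^ Fintype.card ι := by
  classical
  set k := Fintype.card ι with hk
  refine opNorm_le_of_forall_norm_le_one M fun x hx => ?_
  have norm_sum_le_card (S : Finset ι) : ‖∑ i ∈ S, x i‖ ≤ k :=
    calc ‖∑ i ∈ S, x i‖ ≤ ∑ _i ∈ S, (1 : ℝ) := norm_sum_le_of_le S fun i _ => hx i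
      _ ≤ k := by simpa using card_le_univ S
  have factorial_mul_norm_le : k ! * ‖M x‖ ≤ 2 ^ k * (A * (k : ℝ) ^ k) :=
    calc k ! * ‖M x‖ = ‖∑ S : Finset ι, (-1 : ℤ) ^ #Sᶜ • M (fun _ => ∑ i ∈ S, x i)‖ := by
          rw [← nsmul_eq_mul, ← RCLike.norm_nsmul ℝ]
          exact congrArg norm
            (card_factorial_smul_eq_sum_neg_one_pow_smul_diag M.toMultilinearMap hM x)
      _ ≤ ∑ _S : Finset ι, A * (k : ℝ) ^ k := by
          refine norm_sum_le_of_le _ fun S _ => ?_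
          grw [norm_zsmul_le, hdiag, norm_sum_le_card]
          simp
      _ = 2 ^ k * (A * (k : ℝ) ^ k) := by simp [hk]
  calc ‖M x‖ ≤ A * 2 ^ k * ((k : ℝ) ^ k / k !) := by
        rw [← mul_div_assoc, le_div_iff₀ (by positivity)]
        linarith
    _ ≤ A * 2 ^ k * Real.exp k := by grw [Real.pow_div_factorial_le_exp _ k.cast_nonneg]
    _ = A * (2 * Real.exp 1) ^ k := by rw [mul_pow, ← Real.exp_nat_mul, mul_one, mul_assoc]

end MultilinearNorm

section VectorPolynomial

variable {F : Type*}

theorem sum_pow_smul_eq_sum_lagrange_basis_smul [AddCommGroup F] [Module ℝ F] (k : ℕ)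
    (c : ℕ → F) (t : ℝ) :
    ∑ j ∈ range (k + 1), t ^ j • c j =
      ∑ i ∈ range (k + 1), (Lagrange.basis (range (k + 1)) (Nat.cast : ℕ → ℝ) i).eval t •
        ∑ j ∈ range (k + 1), (i : ℝ) ^ j • c j := by
  have interpolate_pow (j : ℕ) (hj : j ∈ range (k + 1)) : t ^ j = ∑ i ∈ range (k + 1),
      (Lagrange.basis (range (k + 1)) (Nat.cast : ℕ → ℝ) i).eval t * (i : ℝ) ^ j := by
    have degree_lt : (Polynomial.X ^ j : Polynomial ℝ).degree < #(range (k + 1)) := by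
      rw [Polynomial.degree_X_pow, card_range]
      exact_mod_cast mem_range.mp hj
    have := congrArg (Polynomial.eval t)
      (Lagrange.eq_interpolate (v := (Nat.cast : ℕ → ℝ)) Nat.cast_injective.injOn degree_lt)
    simpa [Lagrange.interpolate_apply, Polynomial.eval_finsetSum, mul_comm] using this
  simp only [smul_sum, smul_smul]
  rw [sum_comm]
  exact sum_congr rfl fun j hj => by rw [interpolate_pow j hj, sum_smul]

theorem norm_coeff_le_of_forall_norm_sum_pow_smul_le [NormedAddCommGroup F] [NormedSpace ℝ F]
    {k : ℕ} {c : ℕ → F} {A : ℝ} (hA : 0 < A)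
    (hc : ∀ t ∈ Set.Icc (-1 : ℝ) 1, ‖∑ j ∈ range (k + 1), t ^ j • c j‖ ≤ A) :
    ‖c k‖ ≤ A * 2 ^ k := by
  obtain ⟨ℓ, ℓ_norm, ℓ_apply⟩ := exists_dual_vector'' ℝ (c k)
  let q : Polynomial ℝ :=
    ∑ j ∈ range (k + 1), Polynomial.C (A⁻¹ * ℓ (c j)) * Polynomial.X ^ j
  have q_coeff : q.coeff k = A⁻¹ * ‖c k‖ := by
    simp only [q, Polynomial.finsetSum_coeff, Polynomial.coeff_C_mul_X_pow, sum_ite_eq,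
      self_mem_range_succ, if_true, ℓ_apply, RCLike.ofReal_real_eq_id, id]
  have q_eval (t : ℝ) : q.eval t = A⁻¹ * ℓ (∑ j ∈ range (k + 1), t ^ j • c j) := by
    simp only [q, Polynomial.eval_finsetSum, Polynomial.eval_C_mul, Polynomial.eval_X_pow, map_sum,
      map_smul, smul_eq_mul, mul_sum]
    exact sum_congr rfl fun j _ => by ring
  have q_degree : q.degree ≤ k :=
    Polynomial.degree_le_of_natDegree_le <| Polynomial.natDegree_sum_le_of_forall_le _ _
      fun j hj => (Polynomial.natDegree_C_mul_X_pow_le _ j).trans (mem_range_succ_iff.mp hj)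
  have q_bound (t : ℝ) (ht : t ∈ Set.Icc (-1 : ℝ) 1) : |q.eval t| ≤ 1 := by
    rw [q_eval, abs_mul, abs_of_pos (inv_pos.mpr hA), inv_mul_le_one₀ hA, ← Real.norm_eq_abs]
    exact (ℓ.le_of_opNorm_le ℓ_norm _).trans (by simpa using hc t ht)
  have := Polynomial.Chebyshev.coeff_le_of_forall_abs_le_one q_degree q_bound
  rw [q_coeff, inv_mul_le_iff₀ hA] at this
  exact this.trans (by gcongr <;> simp)

end VectorPolynomial

/-- `P` restricts to a binary form of degree `k` on every plane through the origin, degenerate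
planes included. The coefficient `c j` belongs to the monomial `s ^ (k - j) * t ^ j`. -/
def IsFormOnPlanes {E F : Type*} [AddCommGroup E] [Module ℝ E] [AddCommGroup F] [Module ℝ F]
    (k : ℕ) (P : E → F) : Prop :=
  ∀ v w : E, ∃ c : ℕ → F, ∀ s t : ℝ,
    P (s • v + t • w) = ∑ j ∈ range (k + 1), (s ^ (k - j) * t ^ j) • c j

namespace IsFormOnPlanes

section Algebra

variable {E F : Type*} [AddCommGroup E] [Module ℝ E] [AddCommGroup F] [Module ℝ F] {k : ℕ}
  {P : E → F}

theorem map_smul (hP : IsFormOnPlanes k P) (s : ℝ) (x : E) : P (s • x) = s ^ k • P x := by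
  obtain ⟨c, hc⟩ := hP x 0
  have at_scalar (s : ℝ) : P (s • x) = s ^ k • c 0 := by
    simpa [sum_range_succ'] using hc s 0
  rw [at_scalar s, ← one_smul ℝ x, at_scalar 1, one_pow, one_smul]

theorem exists_map_add_smul_eq_sum (hP : IsFormOnPlanes k P) (x y : E) :
    ∃ c : ℕ → F, c k = P y ∧ ∀ t : ℝ, P (x + t • y) = ∑ j ∈ range (k + 1), t ^ j • c j := by
  obtain ⟨c, hc⟩ := hP x y
  refine ⟨c, ?_, fun t => by simpa using hc 1 t⟩
  have lower_terms : ∑ j ∈ range k, ((0 : ℝ) ^ (k - j) * 1 ^ j) • c j = 0 :=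
    sum_eq_zero fun j hj => by
      rw [zero_pow (Nat.sub_ne_zero_of_lt (mem_range.mp hj)), zero_mul, zero_smul]
  have at_zero_one := hc 0 1
  rw [sum_range_succ, lower_terms] at at_zero_one
  simpa using at_zero_one.symm

theorem map_add_smul_eq_sum_lagrange_basis_smul (hP : IsFormOnPlanes k P) (x y : E) (t : ℝ) :
    P (x + t • y) = ∑ i ∈ range (k + 1),
      (Lagrange.basis (range (k + 1)) (Nat.cast : ℕ → ℝ) i).eval t • P (x + (i : ℝ) • y) := by
  obtain ⟨c, -, hc⟩ := hP.exists_map_add_smul_eq_sum x y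
  simpa only [← hc] using sum_pow_smul_eq_sum_lagrange_basis_smul k c t

end Algebra

section Normed

variable {E F : Type*} [NormedAddCommGroup E] [NormedSpace ℝ E] [NormedAddCommGroup F]
  [NormedSpace ℝ F] {k : ℕ} {P : E → F}

theorem contDiff_map_add_sum_smul {ι : Type*} [Fintype ι] (hP : IsFormOnPlanes k P) (b : ι → E)
    (s : Finset ι) (z : E) : ContDiff ℝ ω fun x : ι → ℝ => P (z + ∑ i ∈ s, x i • b i) := by
  classical
  induction s using Finset.induction_on generalizing z with
  | empty => simpa using contDiff_const
  | insert i s hi ih =>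
    have interpolate (x : ι → ℝ) : P (z + ∑ j ∈ insert i s, x j • b j) = ∑ m ∈ range (k + 1),
        (Lagrange.basis (range (k + 1)) (Nat.cast : ℕ → ℝ) m).eval (x i) •
          P (z + (m : ℝ) • b i + ∑ j ∈ s, x j • b j) := by
      rw [sum_insert hi, add_comm (x i • b i), ← add_assoc,
        hP.map_add_smul_eq_sum_lagrange_basis_smul]
      simp only [add_right_comm]
    simp only [interpolate]
    refine ContDiff.sum fun m _ => ContDiff.smul ?_ (ih _)
    have basis_contDiff := Polynomial.contDiff_aeval (𝕜 := ℝ)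
      (Lagrange.basis (range (k + 1)) (Nat.cast : ℕ → ℝ) m) ω
    simp only [Polynomial.coe_aeval_eq_eval] at basis_contDiff
    exact basis_contDiff.comp (contDiff_apply ℝ ℝ i)

theorem contDiff [FiniteDimensional ℝ E] (hP : IsFormOnPlanes k P) : ContDiff ℝ ω P := by
  let b := Module.finBasis ℝ E
  have := (hP.contDiff_map_add_sum_smul b univ 0).comp b.equivFunL.contDiff
  simpa [Function.comp_def, b.sum_repr] using this

theorem norm_le_of_forall_mem_closedBall (hP : IsFormOnPlanes k P) {x₀ : E} {r A : ℝ} (hr : 0 < r)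
    (hA : 0 < A) (hbound : ∀ x ∈ Metric.closedBall x₀ r, ‖P x‖ ≤ A) (x : E) :
    ‖P x‖ ≤ A * (2 / r) ^ k * ‖x‖ ^ k := by
  let y := r • ‖x‖⁻¹ • x
  have norm_y : ‖y‖ ≤ r := by
    rw [norm_smul, norm_smul, norm_inv, norm_norm, Real.norm_of_nonneg hr.le]
    exact mul_le_of_le_one_right hr.le inv_mul_le_one
  have norm_map_y : ‖P y‖ ≤ A * 2 ^ k := by
    obtain ⟨c, c_top, hc⟩ := hP.exists_map_add_smul_eq_sum x₀ y
    rw [← c_top]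
    refine norm_coeff_le_of_forall_norm_sum_pow_smul_le hA fun t ht => ?_
    rw [← hc]
    refine hbound _ ?_
    rw [mem_closedBall_iff_norm, add_sub_cancel_left, norm_smul]
    exact (mul_le_of_le_one_left (norm_nonneg y) (abs_le.mpr ht)).trans norm_y
  have x_eq : x = (‖x‖ / r) • y := by
    rw [smul_smul, div_mul_cancel₀ _ hr.ne', norm_smul_norm_inv_smul]
  calc ‖P x‖ = ‖P ((‖x‖ / r) • y)‖ := by rw [← x_eq]
    _ = (‖x‖ / r) ^ k * ‖P y‖ := by
        rw [hP.map_smul, norm_smul, Real.norm_of_nonneg (by positivity)]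
    _ ≤ (‖x‖ / r) ^ k * (A * 2 ^ k) := by gcongr
    _ = A * (2 / r) ^ k * ‖x‖ ^ k := by simp only [div_pow]; ring

theorem iteratedFDeriv_zero_diag (hP : IsFormOnPlanes k P) (hsmooth : ContDiff ℝ ω P) (x : E) :
    iteratedFDeriv ℝ k P 0 (fun _ => x) = (k ! : ℝ) • P x := by
  let line : ℝ →L[ℝ] E := ContinuousLinearMap.toSpanSingleton ℝ x
  have comp_line : P ∘ line = fun t : ℝ => t ^ k • P x := by
    funext t
    simp [line, hP.map_smul]
  calc iteratedFDeriv ℝ k P 0 (fun _ => x) = iteratedDeriv k (P ∘ line) 0 := by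
        rw [iteratedDeriv_eq_iteratedFDeriv, line.iteratedFDeriv_comp_right hsmooth 0 le_top]
        simp [line]
    _ = (k ! : ℝ) • P x := by
        rw [comp_line, iteratedDeriv_smul_const (by fun_prop)]
        simp [Nat.descFactorial_self]

theorem exists_symmetric_continuousMultilinearMap [FiniteDimensional ℝ E]
    (hP : IsFormOnPlanes k P) :
    ∃ M : ContinuousMultilinearMap ℝ (fun _ : Fin k => E) F,
      (∀ (x : Fin k → E) (σ : Equiv.Perm (Fin k)), M (x ∘ σ) = M x) ∧
        ∀ x, M (fun _ => x) = P x := by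
  have hsmooth := hP.contDiff
  refine ⟨(k ! : ℝ)⁻¹ • iteratedFDeriv ℝ k P 0, fun x σ => ?_, fun x => ?_⟩
  · simp only [smul_apply, hsmooth.contDiffAt.iteratedFDeriv_comp_perm]
  · rw [smul_apply, hP.iteratedFDeriv_zero_diag hsmooth, inv_smul_smul₀ (by positivity)]

end Normed

end IsFormOnPlanes

section PowerSeries

variable {E F : Type*} [NormedAddCommGroup F]

theorem exists_interior_forall_norm_le_pow_nonempty [TopologicalSpace E] [BaireSpace E] [Nonempty E]
    {P : ℕ → E → F} (hcont : ∀ k, Continuous (P k))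
    (hbound : ∀ x, ∃ C r : ℝ, ∀ k, ‖P k x‖ ≤ C * r ^ k) :
    ∃ C : ℝ, 0 < C ∧ (interior {x | ∀ k, ‖P k x‖ ≤ C ^ (k + 1)}).Nonempty := by
  let S (m : ℕ) : Set E := {x | ∀ k, ‖P k x‖ ≤ (m + 1 : ℝ) ^ (k + 1)}
  have isClosed_S (m : ℕ) : IsClosed (S m) := by
    simp only [S, Set.ofPred_forall]
    exact isClosed_iInter fun k => isClosed_le (hcont k).norm continuous_const
  have iUnion_S : ⋃ m, S m = Set.univ := by
    refine Set.eq_univ_of_forall fun x => Set.mem_iUnion.mpr ?_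
    obtain ⟨C, r, hx⟩ := hbound x
    obtain ⟨m, hm⟩ := exists_nat_ge (max |C| |r|)
    refine ⟨m, fun k => ?_⟩
    calc ‖P k x‖ ≤ |C * r ^ k| := (hx k).trans (le_abs_self _)
      _ = |r| ^ k * |C| := by rw [abs_mul, abs_pow, mul_comm]
      _ ≤ (m + 1 : ℝ) ^ k * (m + 1) := by
          gcongr
          · linarith [le_max_right |C| |r|]
          · linarith [le_max_left |C| |r|]
  obtain ⟨m, hm⟩ := nonempty_interior_of_iUnion_of_closed isClosed_S iUnion_S
  exact ⟨m + 1, by positivity, hm⟩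

variable [NormedAddCommGroup E] [NormedSpace ℝ E] [NormedSpace ℝ F]

theorem radius_pos_of_forall_norm_le_mul_pow (p : FormalMultilinearSeries ℝ E F) {C K : ℝ}
    (hK : 0 < K) (hp : ∀ k, ‖p k‖ ≤ C * K ^ k) : 0 < p.radius := by
  refine lt_of_lt_of_le ?_ (p.le_radius_of_bound (r := K⁻¹.toNNReal) C fun k => ?_)
  · simpa using hK
  · calc ‖p k‖ * (K⁻¹.toNNReal : ℝ) ^ k ≤ C * K ^ k * K⁻¹ ^ k := by
          rw [Real.coe_toNNReal _ (by positivity)]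
          grw [hp k]
      _ = C := by rw [mul_assoc, ← mul_pow, mul_inv_cancel₀ hK.ne', one_pow, mul_one]

theorem exists_formalMultilinearSeries_of_isFormOnPlanes [FiniteDimensional ℝ E] {P : ℕ → E → F}
    (hP : ∀ k, IsFormOnPlanes k (P k)) (hbound : ∀ x, ∃ C r : ℝ, ∀ k, ‖P k x‖ ≤ C * r ^ k) :
    ∃ p : FormalMultilinearSeries ℝ E F, 0 < p.radius ∧ ∀ k x, p k (fun _ => x) = P k x := by
  have : CompleteSpace E := FiniteDimensional.complete ℝ E
  obtain ⟨C, hC, x₀, hx₀⟩ :=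
    exists_interior_forall_norm_le_pow_nonempty (fun k => (hP k).contDiff.continuous) hbound
  obtain ⟨r, hr, hball⟩ :=
    Metric.nhds_basis_closedBall.mem_iff.mp (mem_interior_iff_mem_nhds.mp hx₀)
  have norm_P_le (k : ℕ) (x : E) : ‖P k x‖ ≤ C ^ (k + 1) * (2 / r) ^ k * ‖x‖ ^ k :=
    (hP k).norm_le_of_forall_mem_closedBall hr (by positivity) (fun y hy => hball hy k) x
  choose p p_symm p_diag using fun k => (hP k).exists_symmetric_continuousMultilinearMap
  have norm_p_le (k : ℕ) : ‖p k‖ ≤ C * (C * (2 / r) * (2 * Real.exp 1)) ^ k :=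
    calc ‖p k‖ ≤ C ^ (k + 1) * (2 / r) ^ k * (2 * Real.exp 1) ^ k := by
          simpa only [Fintype.card_fin] using
            opNorm_le_of_symmetric_of_norm_diag_le (p k) (p_symm k)
              (A := C ^ (k + 1) * (2 / r) ^ k) (by positivity) (by simpa [p_diag] using norm_P_le k)
      _ = C * (C * (2 / r) * (2 * Real.exp 1)) ^ k := by simp only [mul_pow]; ring
  exact ⟨p, radius_pos_of_forall_norm_le_mul_pow p (by positivity) norm_p_le, p_diag⟩

end PowerSeries

section Lines

variable {E F : Type*} [NormedAddCommGroup E] [NormedSpace ℝ E] [NormedAddCommGroup F]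
  [NormedSpace ℝ F] {f g : E → F} {a : E}

/-- `f` is analytic at `a` along every line through `a`, parametrized so that `a` sits at `0`. -/
def AnalyticOnLinesAt (f : E → F) (a : E) : Prop :=
  ∀ x : E, AnalyticAt ℝ (fun t : ℝ => f (a + t • x)) 0

/-- The `k`-th Taylor coefficient of `t ↦ f (a + t • x)` at `t = 0`. As a function of `x` it is the
candidate for the degree `k` part of the expansion of `f` at `a`. -/
noncomputable def lineCoeff (f : E → F) (a : E) (k : ℕ) (x : E) : F :=
  (k ! : ℝ)⁻¹ • iteratedDeriv k (fun t : ℝ => f (a + t • x)) 0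

theorem analyticOnLinesAt_of_analyticAt (hf : AnalyticAt ℝ f a) : AnalyticOnLinesAt f a :=
  fun _ => hf.fun_comp_of_eq (by fun_prop) (by simp)

theorem AnalyticOnLinesAt.sub (hf : AnalyticOnLinesAt f a) (hg : AnalyticOnLinesAt g a) :
    AnalyticOnLinesAt (f - g) a :=
  fun x => (hf x).sub (hg x)

theorem eqOn_zero_of_starConvex_of_analyticOnLinesAt {s : Set E} (hs : StarConvex ℝ a s)
    (hf : ∀ b ∈ s, AnalyticOnLinesAt f b) (hzero : ∀ x, ∀ᶠ t : ℝ in 𝓝 0, f (a + t • x) = 0) :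
    Set.EqOn f 0 s := by
  intro b hb
  have segment_analytic :
      AnalyticOnNhd ℝ (fun t : ℝ => f (a + t • (b - a))) (Set.Icc 0 1) := by
    intro t ht
    have recenter : (fun τ : ℝ => f (a + τ • (b - a))) =
        fun τ => f (a + t • (b - a) + (τ - t) • (b - a)) := by
      funext τ
      congr 1
      module
    rw [recenter]
    exact (hf _ (hs.add_smul_sub_mem hb ht.1 ht.2) (b - a)).fun_comp_of_eq
      (f := fun τ => τ - t) (by fun_prop) (sub_self t)
  have := segment_analytic.eqOn_zero_of_preconnected_of_eventuallyEq_zero isPreconnected_Icc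
    (Set.left_mem_Icc.mpr zero_le_one) (hzero (b - a)) (Set.right_mem_Icc.mpr zero_le_one)
  simpa using this

variable [CompleteSpace F]

theorem eventuallyEq_of_analyticAt_of_analyticOnLinesAt (hg : AnalyticAt ℝ g a)
    (hf : ∀ᶠ b in 𝓝 a, AnalyticOnLinesAt f b)
    (heq : ∀ x, ∀ᶠ t : ℝ in 𝓝 0, f (a + t • x) = g (a + t • x)) : f =ᶠ[𝓝 a] g := by
  obtain ⟨r, hr, hball⟩ :=
    Metric.eventually_nhds_iff_ball.mp (hf.and hg.eventually_analyticAt)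
  have sub_eq_zero_on_ball : Set.EqOn (f - g) 0 (Metric.ball a r) :=
    eqOn_zero_of_starConvex_of_analyticOnLinesAt
      ((convex_ball a r).starConvex (Metric.mem_ball_self hr))
      (fun b hb => (hball b hb).1.sub (analyticOnLinesAt_of_analyticAt (hball b hb).2))
      fun x => (heq x).mono fun t ht => sub_eq_zero.mpr ht
  filter_upwards [Metric.ball_mem_nhds a hr] with b hb
  exact sub_eq_zero.mp (sub_eq_zero_on_ball hb)

theorem lineCoeff_eq_coeff {p : FormalMultilinearSeries ℝ ℝ F} {x : E}
    (hp : HasFPowerSeriesAt (fun t : ℝ => f (a + t • x)) p 0) (k : ℕ) :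
    lineCoeff f a k x = p.coeff k := by
  obtain ⟨r, hp⟩ := hp
  have factorial_smul_coeff := hp.factorial_smul 1 k
  rw [lineCoeff, iteratedDeriv_eq_iteratedFDeriv, ← factorial_smul_coeff,
    ← Nat.cast_smul_eq_nsmul ℝ, inv_smul_smul₀ (by positivity)]
  rfl

theorem AnalyticOnLinesAt.eventually_hasSum_lineCoeff (hf : AnalyticOnLinesAt f a) (x : E) :
    ∀ᶠ t : ℝ in 𝓝 0, HasSum (fun k => t ^ k • lineCoeff f a k x) (f (a + t • x)) := by
  obtain ⟨p, hp⟩ := hf x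
  simpa only [lineCoeff_eq_coeff hp, zero_add] using hasFPowerSeriesAt_iff.mp hp

theorem AnalyticOnLinesAt.exists_norm_lineCoeff_le (hf : AnalyticOnLinesAt f a) (x : E) :
    ∃ C r : ℝ, ∀ k, ‖lineCoeff f a k x‖ ≤ C * r ^ k := by
  obtain ⟨p, hp⟩ := hf x
  obtain ⟨C, r, -, -, norm_p_le⟩ := p.le_mul_pow_of_radius_pos hp.radius_pos
  refine ⟨C, r, fun k => ?_⟩
  rw [lineCoeff_eq_coeff hp, ← p.norm_apply_eq_norm_coef]
  exact norm_p_le k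

end Lines

section Planes

variable {E F : Type*} [NormedAddCommGroup E] [NormedSpace ℝ E] [NormedAddCommGroup F]
  [NormedSpace ℝ F] {f : E → F} {a : E}

/-- `f` is analytic at `a` along every parametrized plane through `a`. The directions `v` and `w`
may be linearly dependent, so that lines count as degenerate planes. -/
def AnalyticOnPlanesAt (f : E → F) (a : E) : Prop :=
  ∀ v w : E, AnalyticAt ℝ (fun st : ℝ × ℝ => f (a + st.1 • v + st.2 • w)) 0

theorem AnalyticOnPlanesAt.analyticOnLinesAt (hf : AnalyticOnPlanesAt f a) :
    AnalyticOnLinesAt f a := by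
  intro x
  simpa using (hf x 0).fun_comp_of_eq (f := fun t : ℝ => (t, (0 : ℝ))) (by fun_prop) rfl

theorem AnalyticOnPlanesAt.isFormOnPlanes_lineCoeff [CompleteSpace F]
    (hf : AnalyticOnPlanesAt f a) (k : ℕ) : IsFormOnPlanes k (lineCoeff f a k) := by
  intro v w
  obtain ⟨p, hp⟩ := hf v w
  obtain ⟨c, hc⟩ := exists_diag_smul_add_smul_eq_sum (p k).toMultilinearMap (1, 0) (0, 1)
  refine ⟨c, fun s t => ?_⟩
  let line : ℝ →L[ℝ] ℝ × ℝ := ContinuousLinearMap.toSpanSingleton ℝ (s, t)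
  have line_series : HasFPowerSeriesAt (fun τ : ℝ => f (a + τ • (s • v + t • w)))
      (p.compContinuousLinearMap line) 0 := by
    rw [← line.map_zero] at hp
    convert! hp.compContinuousLinearMap using 2 with τ
    simp [line, mul_smul, add_assoc]
  rw [lineCoeff_eq_coeff line_series, ← hc]
  exact congrArg (p k) (funext fun _ => by simp [line])

theorem analyticAt_of_eventually_analyticOnPlanesAt [FiniteDimensional ℝ E] [CompleteSpace F]
    (hf : ∀ᶠ b in 𝓝 a, AnalyticOnPlanesAt f b) : AnalyticAt ℝ f a := by
  have forms := hf.self_of_nhds.isFormOnPlanes_lineCoeff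
  have lines := hf.self_of_nhds.analyticOnLinesAt
  obtain ⟨p, p_radius, p_diag⟩ :=
    exists_formalMultilinearSeries_of_isFormOnPlanes forms lines.exists_norm_lineCoeff_le
  have sum_analyticAt : AnalyticAt ℝ (fun y => p.sum (y - a)) a := by
    simpa using ((p.hasFPowerSeriesOnBall p_radius).comp_sub a).analyticAt
  have f_eq_sum_on_lines (x : E) : ∀ᶠ t : ℝ in 𝓝 0, f (a + t • x) = p.sum (a + t • x - a) := by
    filter_upwards [lines.eventually_hasSum_lineCoeff x] with t ht
    simp only [add_sub_cancel_left, FormalMultilinearSeries.sum, p_diag, (forms _).map_smul,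
      ht.tsum_eq]
  exact sum_analyticAt.congr (eventuallyEq_of_analyticAt_of_analyticOnLinesAt sum_analyticAt
    (hf.mono fun b hb => hb.analyticOnLinesAt) f_eq_sum_on_lines).symm

end Planes

theorem exists_linearIndependent_pair_mem_span_pair {K V : Type*} [DivisionRing K] [AddCommGroup V]
    [Module K V] (hV : 1 < Module.rank K V) (v w : V) :
    ∃ v' w' : V, LinearIndependent K ![v', w'] ∧
      v ∈ Submodule.span K {v', w'} ∧ w ∈ Submodule.span K {v', w'} := by
  have extend {u : V} (hu : u ≠ 0) (hv : v ∈ Submodule.span K {u})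
      (hw : w ∈ Submodule.span K {u}) : ∃ v' w' : V, LinearIndependent K ![v', w'] ∧
        v ∈ Submodule.span K {v', w'} ∧ w ∈ Submodule.span K {v', w'} := by
    obtain ⟨y, hy⟩ := exists_linearIndependent_pair_of_one_lt_rank hV hu
    have span_le : Submodule.span K {u} ≤ Submodule.span K {u, y} :=
      Submodule.span_mono (by simp)
    exact ⟨u, y, hy, span_le hv, span_le hw⟩
  rcases eq_or_ne v 0 with rfl | hv
  · rcases eq_or_ne w 0 with rfl | hw
    · have : Nontrivial V := rank_pos_iff_nontrivial (R := K).mp (zero_lt_one.trans hV)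
      obtain ⟨u, hu⟩ := exists_ne (0 : V)
      exact extend hu (zero_mem _) (zero_mem _)
    · exact extend hw (zero_mem _) (Submodule.mem_span_singleton_self w)
  · by_cases hvw : LinearIndependent K ![v, w]
    · exact ⟨v, w, hvw, Submodule.subset_span (by simp), Submodule.subset_span (by simp)⟩
    · obtain ⟨c, rfl⟩ : ∃ c : K, c • v = w := by
        simpa [LinearIndependent.pair_iff' hv] using hvw
      exact extend hv (Submodule.mem_span_singleton_self v)
        (Submodule.smul_mem _ c (Submodule.mem_span_singleton_self v))

theorem analyticOnPlanesAt_of_forall_linearIndependent {E F : Type*} [NormedAddCommGroup E]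
    [NormedSpace ℝ E] [NormedAddCommGroup F] [NormedSpace ℝ F] (hE : 1 < Module.rank ℝ E)
    {f : E → F} {a : E} (hf : ∀ v w : E, LinearIndependent ℝ ![v, w] →
      AnalyticAt ℝ (fun st : ℝ × ℝ => f (a + st.1 • v + st.2 • w)) 0) :
    AnalyticOnPlanesAt f a := by
  intro v w
  obtain ⟨v', w', independent, hv, hw⟩ := exists_linearIndependent_pair_mem_span_pair hE v w
  obtain ⟨α, β, rfl⟩ := Submodule.mem_span_pair.mp hv
  obtain ⟨γ, δ, rfl⟩ := Submodule.mem_span_pair.mp hw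
  have change_coordinates (st : ℝ × ℝ) :
      a + st.1 • (α • v' + β • w') + st.2 • (γ • v' + δ • w') =
        a + (st.1 * α + st.2 * γ) • v' + (st.1 * β + st.2 * δ) • w' := by
    module
  simp only [change_coordinates]
  exact (hf v' w' independent).fun_comp_of_eq
    (f := fun st : ℝ × ℝ => (st.1 * α + st.2 * γ, st.1 * β + st.2 * δ))
    (ContDiffAt.analyticAt (by fun_prop)) (by simp)

theorem bochnak_siciak_analytic_on_planes_implies_analytic_general {E F : Type*}
    [NormedAddCommGroup E] [NormedSpace ℝ E] [NormedAddCommGroup F] [NormedSpace ℝ F]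
    [CompleteSpace F] (hE : 1 < Module.finrank ℝ E) {U : Set E} (hU : IsOpen U) {f : E → F}
    (hplanes : ∀ a v w : E, LinearIndependent ℝ ![v, w] →
      AnalyticOn ℝ (fun st : ℝ × ℝ => f (a + st.1 • v + st.2 • w))
        {st : ℝ × ℝ | a + st.1 • v + st.2 • w ∈ U}) :
    AnalyticOn ℝ f U := by
  have : FiniteDimensional ℝ E := Module.finite_of_finrank_pos (zero_lt_one.trans hE)
  have planes_at (b : E) (hb : b ∈ U) : AnalyticOnPlanesAt f b := by
    refine analyticOnPlanesAt_of_forall_linearIndependent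
      (Module.one_lt_rank_of_one_lt_finrank hE) fun v w hvw => ?_
    have isOpen_preimage : IsOpen {st : ℝ × ℝ | b + st.1 • v + st.2 • w ∈ U} :=
      hU.preimage (by fun_prop)
    exact isOpen_preimage.analyticOn_iff_analyticOnNhd.mp (hplanes b v w hvw) 0 (by simpa using hb)
  exact fun a ha => (analyticAt_of_eventually_analyticOnPlanesAt
    ((hU.eventually_mem ha).mono planes_at)).analyticWithinAt

/-- **Bochnak–Siciak theorem (Theorem 8.3).** If `f : U → ℝ`, defined on an open set
`U ⊆ ℝⁿ` with `n ≥ 2`, is real-analytic on the intersection of `U` with every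
2-dimensional affine plane, then `f` is real-analytic on `U`. -/
theorem bochnak_siciak_analytic_on_planes_implies_analytic
    (n : ℕ) (hn : 2 ≤ n) (U : Set (Fin n → ℝ)) (hU : IsOpen U)
    (f : (Fin n → ℝ) → ℝ)
    (hplanes : ∀ a v w : Fin n → ℝ, LinearIndependent ℝ ![v, w] →
      AnalyticOn ℝ (fun st : ℝ × ℝ => f (a + st.1 • v + st.2 • w))
        {st : ℝ × ℝ | a + st.1 • v + st.2 • w ∈ U}) :
    AnalyticOn ℝ f U := by
  exact bochnak_siciak_analytic_on_planes_implies_analytic_general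
    (hn.trans_eq (Module.finrank_fin_fun ℝ).symm) hU hplanes
end

section
/- Let U ⊆ ℝ^n be a nonempty open set and f : U → ℝ a function. Assume that for every point x ∈ U and every index i ∈ {1,…,n}, the one-variable function t ↦ f(x + t·e_i) is real-analytic on the open set {t ∈ ℝ : x + t·e_i ∈ U}, where e_i is the i-th standard basis vector. Then there exists a nonempty open subset U₀ ⊆ U such that the restriction f|_{U₀} is real-analytic. (Theorem 3.1, Siciak–Błocki.) -/
/-!
Slicing along one coordinate and applying Baire's theorem twice (to the sets on which slices are
continuous, by induction on the dimension, and to the sets of points whose one-variable Taylor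
series obey a given geometric bound), one finds a nonempty open box on which `f` is approximated,
uniformly along each coordinate line, by polynomials of degree at most `N` with error `M * ρ ^ N`,
where `ρ > 0` is as small as desired. Tensor-product Lagrange interpolation at `N + 1` equispaced
nodes has operator norm at most exponential in `N`, even when measured on power series
coefficients. For `ρ` small enough, the telescoping series of the interpolants of `f` therefore
converges to `f` with absolutely summable power series coefficients, so `f` is analytic.
-/

open Set Filter Topology Metric Polynomial
open scoped Nat

section PowerSeries

variable {𝕜 E F : Type*} [NontriviallyNormedField 𝕜] [NormedAddCommGroup E] [NormedSpace 𝕜 E]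
  [NormedAddCommGroup F] [NormedSpace 𝕜 F]

variable (𝕜) in
/-- `g` is the sum on the open unit ball of a power series at `0` whose coefficients have total
norm at most `A`. The class of such functions is stable under absolutely convergent sums, which
makes it a substitute for uniform convergence on a complex neighbourhood. -/
def PowerSeriesNormLE (g : E → F) (A : ℝ) : Prop :=
  ∃ p : FormalMultilinearSeries 𝕜 E F, Summable (fun m => ‖p m‖) ∧ ∑' m, ‖p m‖ ≤ A ∧
    ∀ x ∈ ball (0 : E) 1, HasSum (fun m => p m fun _ => x) (g x)

lemma norm_apply_diag_le {m : ℕ} (q : ContinuousMultilinearMap 𝕜 (fun _ : Fin m => E) F)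
    {x : E} (hx : x ∈ ball (0 : E) 1) : ‖q fun _ => x‖ ≤ ‖q‖ :=
  q.unit_le_opNorm ((pi_norm_const_le x).trans (mem_ball_zero_iff.1 hx).le)

namespace PowerSeriesNormLE

variable {g h : E → F} {A B : ℝ}

lemma mono (hg : PowerSeriesNormLE 𝕜 g A) (hAB : A ≤ B) : PowerSeriesNormLE 𝕜 g B := by
  obtain ⟨p, hp, hpA, hpg⟩ := hg
  exact ⟨p, hp, hpA.trans hAB, hpg⟩

lemma zero : PowerSeriesNormLE 𝕜 (fun _ : E => (0 : F)) 0 :=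
  ⟨0, by simp, by simp, fun x _ => by simp [hasSum_zero]⟩

lemma const (c : F) : PowerSeriesNormLE 𝕜 (fun _ : E => c) ‖c‖ := by
  have hne (m : ℕ) (hm : m ≠ 0) : constFormalMultilinearSeries 𝕜 E c m = 0 :=
    constFormalMultilinearSeries_apply_of_nonzero hm
  have hnorm : HasSum (fun m => ‖constFormalMultilinearSeries 𝕜 E c m‖) ‖c‖ := by
    simpa using hasSum_single (f := fun m => ‖constFormalMultilinearSeries 𝕜 E c m‖) 0
      fun m hm => by rw [hne m hm, norm_zero]
  refine ⟨constFormalMultilinearSeries 𝕜 E c, hnorm.summable, hnorm.tsum_eq.le, fun x _ => ?_⟩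
  simpa using hasSum_single (f := fun m => constFormalMultilinearSeries 𝕜 E c m fun _ => x) 0
    fun m hm => by simp [hne m hm]

lemma add (hg : PowerSeriesNormLE 𝕜 g A) (hh : PowerSeriesNormLE 𝕜 h B) :
    PowerSeriesNormLE 𝕜 (fun x => g x + h x) (A + B) := by
  obtain ⟨p, hp, hpA, hpg⟩ := hg
  obtain ⟨q, hq, hqB, hqh⟩ := hh
  have hle (m : ℕ) : ‖(p + q) m‖ ≤ ‖p m‖ + ‖q m‖ := norm_add_le _ _
  have hsum : Summable fun m => ‖(p + q) m‖ :=
    .of_nonneg_of_le (fun _ => norm_nonneg _) hle (hp.add hq)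
  refine ⟨p + q, hsum, ?_, fun x hx => by simpa using (hpg x hx).add (hqh x hx)⟩
  calc ∑' m, ‖(p + q) m‖ ≤ ∑' m, (‖p m‖ + ‖q m‖) := hsum.tsum_le_tsum hle (hp.add hq)
    _ = ∑' m, ‖p m‖ + ∑' m, ‖q m‖ := hp.tsum_add hq
    _ ≤ A + B := add_le_add hpA hqB

lemma const_smul (hg : PowerSeriesNormLE 𝕜 g A) (c : 𝕜) :
    PowerSeriesNormLE 𝕜 (fun x => c • g x) (‖c‖ * A) := by
  obtain ⟨p, hp, hpA, hpg⟩ := hg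
  have hnorm (m : ℕ) : ‖(c • p) m‖ = ‖c‖ * ‖p m‖ := norm_smul c (p m)
  refine ⟨c • p, ?_, ?_, fun x hx => by simpa using (hpg x hx).const_smul c⟩
  · simpa only [hnorm] using hp.mul_left ‖c‖
  · simp only [hnorm, tsum_mul_left]
    gcongr

lemma clm_smul (hg : PowerSeriesNormLE 𝕜 g A) (ℓ : E →L[𝕜] 𝕜) :
    PowerSeriesNormLE 𝕜 (fun x => ℓ x • g x) (‖ℓ‖ * A) := by
  obtain ⟨p, hp, hpA, hpg⟩ := hg
  let q : FormalMultilinearSeries 𝕜 E F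
    | 0 => 0
    | m + 1 => (ℓ.smulRight (p m)).uncurryLeft
  have hnorm (m : ℕ) : ‖q (m + 1)‖ = ‖ℓ‖ * ‖p m‖ := by
    rw [ContinuousLinearMap.uncurryLeft_norm, ContinuousLinearMap.norm_smulRight_apply]
  have hsum : Summable fun m => ‖q m‖ :=
    (summable_nat_add_iff 1).1 (by simpa only [hnorm] using hp.mul_left ‖ℓ‖)
  refine ⟨q, hsum, ?_, fun x hx => ?_⟩
  · rw [hsum.tsum_eq_zero_add]
    simp only [hnorm, tsum_mul_left, q, norm_zero, zero_add]
    gcongr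
  · rw [← hasSum_nat_add_iff' 1]
    simpa [q, ContinuousLinearMap.uncurryLeft_apply, Fin.tail_def]
      using (hpg x hx).const_smul (ℓ x)

lemma clm_sub_const_smul (hg : PowerSeriesNormLE 𝕜 g A) (ℓ : E →L[𝕜] 𝕜) (a : 𝕜) :
    PowerSeriesNormLE 𝕜 (fun x => (ℓ x - a) • g x) ((‖ℓ‖ + ‖a‖) * A) := by
  simpa [add_mul, sub_smul, ← sub_eq_add_neg] using (hg.clm_smul ℓ).add (hg.const_smul (-a))

lemma prod_affine_smul {κ : Type*} (s : Finset κ) (hg : PowerSeriesNormLE 𝕜 g A)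
    (ℓ : E →L[𝕜] 𝕜) (a c : κ → 𝕜) :
    PowerSeriesNormLE 𝕜 (fun x => (∏ k ∈ s, c k * (ℓ x - a k)) • g x)
      ((∏ k ∈ s, ‖c k‖ * (‖ℓ‖ + ‖a k‖)) * A) := by
  classical
  induction s using Finset.induction_on with
  | empty => simpa using hg
  | insert k s hk ih =>
    simpa only [Finset.prod_insert hk, mul_smul, mul_assoc]
      using (ih.clm_sub_const_smul ℓ (a k)).const_smul (c k)

lemma sum {ι : Type*} (s : Finset ι) {g : ι → E → F} {A : ι → ℝ}
    (hg : ∀ k ∈ s, PowerSeriesNormLE 𝕜 (g k) (A k)) :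
    PowerSeriesNormLE 𝕜 (fun x => ∑ k ∈ s, g k x) (∑ k ∈ s, A k) := by
  classical
  induction s using Finset.induction_on with
  | empty => simpa using zero
  | insert a s ha ih =>
    simp only [Finset.sum_insert ha]
    exact (hg a (by simp)).add (ih fun k hk => hg k (by simp [hk]))

lemma norm_le (hg : PowerSeriesNormLE 𝕜 g A) {x : E} (hx : x ∈ ball (0 : E) 1) : ‖g x‖ ≤ A := by
  obtain ⟨p, hp, hpA, hpg⟩ := hg
  rw [← (hpg x hx).tsum_eq]
  exact (tsum_of_norm_bounded hp.hasSum fun m => norm_apply_diag_le (p m) hx).trans hpA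

lemma hasSum [CompleteSpace F] {g : ℕ → E → F} {A : ℕ → ℝ} {G : E → F}
    (hg : ∀ k, PowerSeriesNormLE 𝕜 (g k) (A k)) (hA : Summable A)
    (hG : ∀ x ∈ ball (0 : E) 1, HasSum (fun k => g k x) (G x)) :
    PowerSeriesNormLE 𝕜 G (∑' k, A k) := by
  choose p hp hpA hpg using hg
  have hnorms : Summable fun k => ∑' m, ‖p k m‖ :=
    .of_nonneg_of_le (fun _ => tsum_nonneg fun _ => norm_nonneg _) hpA hA
  have hsum : Summable fun q : ℕ × ℕ => ‖p q.1 q.2‖ :=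
    (summable_prod_of_nonneg fun _ => norm_nonneg _).2 ⟨hp, hnorms⟩
  obtain ⟨hcol, hcols⟩ : (∀ m, Summable fun k => ‖p k m‖) ∧ Summable fun m => ∑' k, ‖p k m‖ :=
    (summable_prod_of_nonneg fun _ => norm_nonneg _).1 hsum.prod_symm
  obtain ⟨P, hP⟩ : ∃ P : FormalMultilinearSeries 𝕜 E F, ∀ m, HasSum (fun k => p k m) (P m) :=
    Classical.skolem.1 fun m => (hcol m).of_norm
  have hPle (m : ℕ) : ‖P m‖ ≤ ∑' k, ‖p k m‖ :=
    (hP m).tsum_eq ▸ norm_tsum_le_tsum_norm (hcol m)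
  have hPsum : Summable fun m => ‖P m‖ := .of_nonneg_of_le (fun _ => norm_nonneg _) hPle hcols
  refine ⟨P, hPsum, ?_, fun x hx => ?_⟩
  · calc ∑' m, ‖P m‖ ≤ ∑' m, ∑' k, ‖p k m‖ := hPsum.tsum_le_tsum hPle hcols
      _ = ∑' k, ∑' m, ‖p k m‖ := Summable.tsum_comm (f := fun k m => ‖p k m‖) hsum
      _ ≤ ∑' k, A k := hnorms.tsum_le_tsum hpA hA
  · have hdouble : Summable fun q : ℕ × ℕ => p q.1 q.2 fun _ => x :=
      .of_norm_bounded hsum fun q => norm_apply_diag_le _ hx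
    have hrows : ∑' q : ℕ × ℕ, (p q.1 q.2 fun _ => x) = G x :=
      (hdouble.hasSum.prod_fiberwise fun k => hpg k x hx).unique (hG x hx)
    rw [← hrows]
    refine HasSum.prod_fiberwise ((Equiv.prodComm ℕ ℕ).hasSum_iff.2 hdouble.hasSum) fun m => ?_
    exact (hP m).mapL (ContinuousMultilinearMap.apply 𝕜 (fun _ : Fin m => E) F fun _ => x)

lemma analyticOnNhd [CompleteSpace F] (hg : PowerSeriesNormLE 𝕜 g A) :
    AnalyticOnNhd 𝕜 g (ball 0 1) := by
  obtain ⟨p, hp, -, hpg⟩ := hg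
  have hball : eball (0 : E) 1 = ball 0 1 := by rw [← ENNReal.ofReal_one, eball_ofReal]
  have hseries : HasFPowerSeriesOnBall g p 0 1 := by
    refine ⟨?_, one_pos, fun {y} hy => ?_⟩
    · simpa using p.le_radius_of_summable (r := 1) (by simpa using hp)
    · rw [zero_add]
      exact hpg y (hball ▸ hy)
  exact hball ▸ hseries.analyticOnNhd

end PowerSeriesNormLE

end PowerSeries

section Interpolation

/-- The tensor product of Lagrange interpolation at the nodes `v` in each variable: the
interpolant of `g` on the grid `v ^ ι`. -/
noncomputable def tensorInterpolate {𝕜 ι κ : Type*} [Field 𝕜] [Fintype ι] [DecidableEq ι]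
    [Fintype κ] [DecidableEq κ] (v : κ → 𝕜) (g : (ι → 𝕜) → 𝕜) (x : ι → 𝕜) : 𝕜 :=
  ∑ β : ι → κ, g (v ∘ β) * ∏ i, (Lagrange.basis Finset.univ v (β i)).eval (x i)

section Algebra

variable {𝕜 ι κ κ' : Type*} [Field 𝕜] [Fintype ι] [DecidableEq ι] [Fintype κ] [DecidableEq κ]
  [Fintype κ'] [DecidableEq κ']

lemma eval_lagrangeBasis (v : κ → 𝕜) (k : κ) (t : 𝕜) :
    (Lagrange.basis Finset.univ v k).eval t =
      ∏ j ∈ Finset.univ.erase k, (v k - v j)⁻¹ * (t - v j) := by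
  simp [Lagrange.basis, Lagrange.basisDivisor, eval_prod]

lemma sum_eval_mul_eval_lagrangeBasis {v : κ → 𝕜} (hv : Function.Injective v) {p : 𝕜[X]}
    (hp : p.natDegree < Fintype.card κ) (t : 𝕜) :
    ∑ k, p.eval (v k) * (Lagrange.basis Finset.univ v k).eval t = p.eval t := by
  have hdegree : p.degree < (Finset.univ : Finset κ).card :=
    degree_le_natDegree.trans_lt (by exact_mod_cast hp)
  conv_rhs => rw [Lagrange.eq_interpolate hv.injOn hdegree]
  simp [Lagrange.interpolate_apply, eval_finsetSum]

lemma tensorInterpolate_sub (v : κ → 𝕜) (g h : (ι → 𝕜) → 𝕜) :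
    tensorInterpolate v (g - h) = tensorInterpolate v g - tensorInterpolate v h := by
  funext x
  simp [tensorInterpolate, sub_mul]

lemma tensorInterpolate_cons {n : ℕ} (v : κ → 𝕜) (g : (Fin (n + 1) → 𝕜) → 𝕜) (t : 𝕜)
    (y : Fin n → 𝕜) :
    tensorInterpolate v g (Fin.cons t y : Fin (n + 1) → 𝕜) =
      ∑ k, (Lagrange.basis Finset.univ v k).eval t *
        tensorInterpolate v (fun z => g (Fin.cons (v k) z)) y := by
  have hcons (k : κ) (β : Fin n → κ) :
      v ∘ (Fin.cons k β : Fin (n + 1) → κ) = Fin.cons (v k) (v ∘ β) := by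
    funext i
    cases i using Fin.cases <;> simp
  simp only [tensorInterpolate]
  rw [← (Fin.consEquiv fun _ => κ).sum_comp, Fintype.sum_prod_type]
  simp [Fin.consEquiv, hcons, Fin.prod_univ_succ, Finset.mul_sum, mul_left_comm]

lemma tensorInterpolate_tensorInterpolate {v : κ → 𝕜} {w : κ' → 𝕜} (hv : Function.Injective v)
    (hw : Function.Injective w) (hcard : Fintype.card κ ≤ Fintype.card κ')
    (g : (ι → 𝕜) → 𝕜) :
    tensorInterpolate w (tensorInterpolate v g) = tensorInterpolate v g := by
  have hdegree (k : κ) : (Lagrange.basis Finset.univ v k).natDegree < Fintype.card κ' := by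
    have := Fintype.card_pos_iff.2 ⟨k⟩
    rw [Lagrange.natDegree_basis hv.injOn (Finset.mem_univ k), Finset.card_univ]
    omega
  funext x
  simp only [tensorInterpolate, Finset.sum_mul]
  rw [Finset.sum_comm]
  refine Finset.sum_congr rfl fun γ _ => ?_
  simp only [mul_assoc, ← Finset.mul_sum, ← Finset.prod_mul_distrib, Function.comp_apply]
  rw [← Fintype.prod_sum fun i k => (Lagrange.basis Finset.univ v (γ i)).eval (w k) *
    (Lagrange.basis Finset.univ w k).eval (x i)]
  simp only [sum_eval_mul_eval_lagrangeBasis hw (hdegree _)]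

end Algebra

section Norm

variable {𝕜 κ : Type*} [NormedField 𝕜] [Fintype κ] [DecidableEq κ]

/-- A bound for the Lagrange basis polynomial of the node `v k`, obtained by replacing each of its
linear factors `(v k - v j)⁻¹ * (t - v j)` by the sum of the norms of its coefficients. -/
noncomputable def lagrangeWeight (v : κ → 𝕜) (k : κ) : ℝ :=
  ∏ j ∈ Finset.univ.erase k, ‖(v k - v j)⁻¹‖ * (1 + ‖v j‖)

/-- An upper bound for the Lebesgue constant of the nodes `v`. Being a bound for coefficients
rather than values, it controls power series and not only suprema. -/
noncomputable def lebesgueWeight (v : κ → 𝕜) : ℝ :=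
  ∑ k, lagrangeWeight v k

lemma lagrangeWeight_nonneg (v : κ → 𝕜) (k : κ) : 0 ≤ lagrangeWeight v k :=
  Finset.prod_nonneg fun _ _ => by positivity

lemma lebesgueWeight_nonneg (v : κ → 𝕜) : 0 ≤ lebesgueWeight v :=
  Finset.sum_nonneg fun k _ => lagrangeWeight_nonneg v k

lemma norm_eval_lagrangeBasis_le (v : κ → 𝕜) (k : κ) {t : 𝕜} (ht : ‖t‖ ≤ 1) :
    ‖(Lagrange.basis Finset.univ v k).eval t‖ ≤ lagrangeWeight v k := by
  rw [eval_lagrangeBasis, norm_prod]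
  refine Finset.prod_le_prod (fun _ _ => norm_nonneg _) fun j _ => ?_
  rw [norm_mul]
  gcongr
  exact (norm_sub_le _ _).trans (by gcongr)

lemma norm_sum_eval_lagrangeBasis_mul_le (v : κ → 𝕜) {a : κ → 𝕜} {D : ℝ} (ha : ∀ k, ‖a k‖ ≤ D)
    {t : 𝕜} (ht : ‖t‖ ≤ 1) :
    ‖∑ k, (Lagrange.basis Finset.univ v k).eval t * a k‖ ≤ lebesgueWeight v * D := by
  rw [lebesgueWeight, Finset.sum_mul]
  refine norm_sum_le_of_le _ fun k _ => (norm_mul_le _ _).trans ?_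
  exact mul_le_mul (norm_eval_lagrangeBasis_le v k ht) (ha k) (norm_nonneg _)
    (lagrangeWeight_nonneg v k)

end Norm

section PowerSeries

variable {𝕜 ι κ : Type*} [NontriviallyNormedField 𝕜] [Fintype ι] [Fintype κ] [DecidableEq κ]

lemma norm_proj_le_one (i : ι) : ‖(ContinuousLinearMap.proj i : (ι → 𝕜) →L[𝕜] 𝕜)‖ ≤ 1 :=
  ContinuousLinearMap.opNorm_le_bound _ zero_le_one fun x => by simpa using norm_le_pi_norm x i

lemma powerSeriesNormLE_prod_eval_lagrangeBasis (v : κ → 𝕜) (β : ι → κ) (s : Finset ι) :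
    PowerSeriesNormLE 𝕜 (fun x : ι → 𝕜 => ∏ i ∈ s, (Lagrange.basis Finset.univ v (β i)).eval (x i))
      (∏ i ∈ s, lagrangeWeight v (β i)) := by
  classical
  induction s using Finset.induction_on with
  | empty => simpa using PowerSeriesNormLE.const (𝕜 := 𝕜) (E := ι → 𝕜) (1 : 𝕜)
  | insert i s hi ih =>
    simp only [Finset.prod_insert hi, eval_lagrangeBasis v (β i)]
    refine (ih.prod_affine_smul _ (ContinuousLinearMap.proj i) v _).mono ?_
    refine mul_le_mul_of_nonneg_right ?_ (Finset.prod_nonneg fun _ _ => lagrangeWeight_nonneg v _)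
    refine Finset.prod_le_prod (fun _ _ => by positivity) fun j _ => ?_
    gcongr
    exact norm_proj_le_one i

lemma powerSeriesNormLE_tensorInterpolate [DecidableEq ι] (v : κ → 𝕜) {g : (ι → 𝕜) → 𝕜} {D : ℝ}
    (hg : ∀ β : ι → κ, ‖g (v ∘ β)‖ ≤ D) :
    PowerSeriesNormLE 𝕜 (tensorInterpolate v g) (D * lebesgueWeight v ^ Fintype.card ι) := by
  refine (PowerSeriesNormLE.sum Finset.univ fun (β : ι → κ) _ =>
    (powerSeriesNormLE_prod_eval_lagrangeBasis v β Finset.univ).const_smul (g (v ∘ β))).mono ?_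
  calc ∑ β : ι → κ, ‖g (v ∘ β)‖ * ∏ i, lagrangeWeight v (β i)
      ≤ ∑ β : ι → κ, D * ∏ i, lagrangeWeight v (β i) := by
        gcongr with β
        · exact Finset.prod_nonneg fun _ _ => lagrangeWeight_nonneg v _
        · exact hg β
    _ = D * lebesgueWeight v ^ Fintype.card ι := by
        rw [← Finset.mul_sum, ← Fintype.prod_sum fun (_ : ι) k => lagrangeWeight v k]
        simp [lebesgueWeight]

end PowerSeries

end Interpolation

section PolynomialApproximation

variable {𝕜 ι : Type*} [NormedField 𝕜] [DecidableEq ι]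

/-- `h` is uniformly `ε`-close on `S` to a polynomial of degree at most `N`. -/
def PolyApproxOn (N : ℕ) (ε : ℝ) (S : Set 𝕜) (h : 𝕜 → 𝕜) : Prop :=
  ∃ p : 𝕜[X], p.natDegree ≤ N ∧ ∀ t ∈ S, ‖h t - p.eval t‖ ≤ ε

/-- Along every line parallel to the `i`-th axis, `f` is `ε`-close on `W` to a polynomial of degree
at most `N` in the `i`-th coordinate. -/
def CoordPolyApproxOn (N : ℕ) (ε : ℝ) (W : Set (ι → 𝕜)) (i : ι)
    (f : (ι → 𝕜) → 𝕜) : Prop :=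
  ∀ x ∈ W, PolyApproxOn N ε {t | Function.update x i t ∈ W} fun t => f (Function.update x i t)

variable {N : ℕ} {ε : ℝ}

lemma PolyApproxOn.mono {ε' : ℝ} {S S' : Set 𝕜} {h : 𝕜 → 𝕜} (hh : PolyApproxOn N ε S h)
    (hε : ε ≤ ε') (hS : S' ⊆ S) : PolyApproxOn N ε' S' h := by
  obtain ⟨p, hp, hph⟩ := hh
  exact ⟨p, hp, fun t ht => (hph t (hS ht)).trans hε⟩

lemma CoordPolyApproxOn.mono {ε' : ℝ} {W W' : Set (ι → 𝕜)} {i : ι}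
    {f : (ι → 𝕜) → 𝕜} (hf : CoordPolyApproxOn N ε W i f) (hε : ε ≤ ε') (hW : W' ⊆ W) :
    CoordPolyApproxOn N ε' W' i f :=
  fun x hx => (hf x (hW hx)).mono hε fun _ ht => hW ht

lemma CoordPolyApproxOn.comp_affine {W W' : Set (ι → 𝕜)} {i : ι}
    {f : (ι → 𝕜) → 𝕜} (hf : CoordPolyApproxOn N ε W i f) (c : ι → 𝕜) (δ : 𝕜)
    (hW : MapsTo (fun x => c + δ • x) W' W) :
    CoordPolyApproxOn N ε W' i fun x => f (c + δ • x) := by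
  intro x hx
  obtain ⟨p, hp, hpf⟩ := hf _ (hW hx)
  have hupdate (t : 𝕜) : c + δ • Function.update x i t =
      Function.update (c + δ • x) i (δ * t + c i) := by
    funext j
    by_cases hj : j = i
    · subst hj
      simp [add_comm]
    · simp [hj]
  refine ⟨p.comp (C δ * X + C (c i)), ?_, fun t ht => ?_⟩
  · calc (p.comp (C δ * X + C (c i))).natDegree ≤ p.natDegree * (C δ * X + C (c i)).natDegree :=
          natDegree_comp_le
      _ ≤ N * 1 := Nat.mul_le_mul hp natDegree_linear_le
      _ = N := mul_one N
  · have hmem : Function.update (c + δ • x) i (δ * t + c i) ∈ W := hupdate t ▸ hW ht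
    simpa [hupdate] using hpf (δ * t + c i) hmem

lemma coordPolyApproxOn_of_insertNth {n : ℕ} {f : (Fin (n + 1) → 𝕜) → 𝕜} {i : Fin (n + 1)}
    {J : Set 𝕜} {Q : Set (Fin n → 𝕜)}
    (hf : ∀ y ∈ Q, PolyApproxOn N ε J fun t => f (i.insertNth t y)) :
    CoordPolyApproxOn N ε {x | x i ∈ J ∧ i.removeNth x ∈ Q} i f := by
  intro x hx
  have hinsert (t : 𝕜) : Function.update x i t = i.insertNth t (i.removeNth x) := by simp
  simpa only [hinsert] using (hf _ hx.2).mono le_rfl fun t ht => by simpa using ht.1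

variable {κ : Type*} [Fintype κ] [DecidableEq κ] {v : κ → 𝕜}

lemma PolyApproxOn.norm_sub_sum_lagrangeBasis_le {h : 𝕜 → 𝕜}
    (hh : PolyApproxOn N ε (closedBall 0 1) h) (hv : Function.Injective v)
    (hv1 : ∀ k, ‖v k‖ ≤ 1) (hN : N < Fintype.card κ) {t : 𝕜} (ht : ‖t‖ ≤ 1) :
    ‖h t - ∑ k, (Lagrange.basis Finset.univ v k).eval t * h (v k)‖ ≤
      (1 + lebesgueWeight v) * ε := by
  obtain ⟨p, hp, hph⟩ := hh
  simp only [mem_closedBall_zero_iff] at hph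
  have hsplit : h t - ∑ k, (Lagrange.basis Finset.univ v k).eval t * h (v k) =
      (h t - p.eval t) -
        ∑ k, (Lagrange.basis Finset.univ v k).eval t * (h (v k) - p.eval (v k)) := by
    simp only [mul_sub, Finset.sum_sub_distrib, mul_comm _ (p.eval _),
      sum_eval_mul_eval_lagrangeBasis hv (hp.trans_lt hN) t]
    ring
  calc _ ≤ ‖h t - p.eval t‖ +
        ‖∑ k, (Lagrange.basis Finset.univ v k).eval t * (h (v k) - p.eval (v k))‖ :=
        hsplit ▸ norm_sub_le _ _
    _ ≤ ε + lebesgueWeight v * ε :=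
        add_le_add (hph t ht) (norm_sum_eval_lagrangeBasis_mul_le v (fun k => hph _ (hv1 k)) ht)
    _ = (1 + lebesgueWeight v) * ε := by ring

lemma cons_mem_closedBall_one_iff {n : ℕ} {t : 𝕜} {y : Fin n → 𝕜} :
    (Fin.cons t y : Fin (n + 1) → 𝕜) ∈ closedBall (0 : Fin (n + 1) → 𝕜) 1 ↔
      ‖t‖ ≤ 1 ∧ y ∈ closedBall (0 : Fin n → 𝕜) 1 := by
  simp [pi_norm_le_iff_of_nonneg, Fin.forall_fin_succ]

lemma CoordPolyApproxOn.cons_head {n : ℕ} {g : (Fin (n + 1) → 𝕜) → 𝕜}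
    (hg : CoordPolyApproxOn N ε (closedBall 0 1) 0 g) {y : Fin n → 𝕜}
    (hy : y ∈ closedBall (0 : Fin n → 𝕜) 1) :
    PolyApproxOn N ε (closedBall 0 1) fun t => g (Fin.cons t y) := by
  simpa only [Fin.update_cons_zero, cons_mem_closedBall_one_iff, hy, and_true,
    ← mem_closedBall_zero_iff, ofPred_mem_eq]
    using hg (Fin.cons 0 y) (cons_mem_closedBall_one_iff.2 ⟨by simp, hy⟩)

lemma CoordPolyApproxOn.cons_tail {n : ℕ} {g : (Fin (n + 1) → 𝕜) → 𝕜} {i : Fin n}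
    (hg : CoordPolyApproxOn N ε (closedBall 0 1) i.succ g) {t : 𝕜} (ht : ‖t‖ ≤ 1) :
    CoordPolyApproxOn N ε (closedBall 0 1) i fun y => g (Fin.cons t y) := by
  intro y hy
  simpa only [← Fin.cons_update, cons_mem_closedBall_one_iff, ht, true_and]
    using hg (Fin.cons t y) (cons_mem_closedBall_one_iff.2 ⟨ht, hy⟩)

lemma norm_sub_tensorInterpolate_le (hv : Function.Injective v) (hv1 : ∀ k, ‖v k‖ ≤ 1)
    (hN : N < Fintype.card κ) (hε : 0 ≤ ε) {n : ℕ} {g : (Fin n → 𝕜) → 𝕜}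
    (hg : ∀ i, CoordPolyApproxOn N ε (closedBall 0 1) i g) {x : Fin n → 𝕜}
    (hx : x ∈ closedBall 0 1) :
    ‖g x - tensorInterpolate v g x‖ ≤ (2 * (1 + lebesgueWeight v)) ^ n * ε := by
  induction n with
  | zero =>
    have hsub (β : Fin 0 → κ) : v ∘ β = x := Subsingleton.elim _ _
    simpa [tensorInterpolate, hsub] using hε
  | succ n ih =>
    obtain ⟨t, y, rfl⟩ : ∃ (t : 𝕜) (y : Fin n → 𝕜), x = Fin.cons t y :=
      ⟨x 0, Fin.tail x, (Fin.cons_self_tail x).symm⟩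
    obtain ⟨ht, hy⟩ := cons_mem_closedBall_one_iff.1 hx
    set Λ := lebesgueWeight v
    have hΛ : 0 ≤ Λ := lebesgueWeight_nonneg v
    have hhead : ‖g (Fin.cons t y) -
        ∑ k, (Lagrange.basis Finset.univ v k).eval t * g (Fin.cons (v k) y)‖ ≤ (1 + Λ) * ε :=
      ((hg 0).cons_head hy).norm_sub_sum_lagrangeBasis_le hv hv1 hN ht
    have htail (k : κ) : ‖g (Fin.cons (v k) y) -
        tensorInterpolate v (fun z => g (Fin.cons (v k) z)) y‖ ≤ (2 * (1 + Λ)) ^ n * ε :=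
      ih (fun i => (hg i.succ).cons_tail (hv1 k)) hy
    have hone : 1 ≤ (2 * (1 + Λ)) ^ n := one_le_pow₀ (by linarith)
    rw [tensorInterpolate_cons]
    calc _ ≤ (1 + Λ) * ε + Λ * ((2 * (1 + Λ)) ^ n * ε) := by
          refine (norm_sub_le_norm_sub_add_norm_sub _ _ _).trans (add_le_add hhead ?_)
          simpa only [mul_sub, Finset.sum_sub_distrib]
            using norm_sum_eval_lagrangeBasis_mul_le v htail ht
      _ ≤ (1 + Λ) * ((2 * (1 + Λ)) ^ n * ε) + (1 + Λ) * ((2 * (1 + Λ)) ^ n * ε) := by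
          gcongr
          · exact le_mul_of_one_le_left hε hone
          · linarith
      _ = (2 * (1 + Λ)) ^ (n + 1) * ε := by ring

end PolynomialApproximation

section EquispacedNodes

/-- The equispaced nodes `0, 1 / (N + 1), …, N / (N + 1)`. -/
noncomputable def equispacedNode (N : ℕ) (k : Fin (N + 1)) : ℝ :=
  k / (N + 1)

lemma equispacedNode_injective (N : ℕ) : Function.Injective (equispacedNode N) := by
  intro j k hjk
  have hN : (N + 1 : ℝ) ≠ 0 := by positivity
  exact Fin.ext (by exact_mod_cast (div_left_inj' hN).1 hjk)

lemma norm_equispacedNode_le_one (N : ℕ) (k : Fin (N + 1)) : ‖equispacedNode N k‖ ≤ 1 := by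
  have hk : (k : ℝ) ≤ N + 1 := by exact_mod_cast k.2.le
  rw [equispacedNode, Real.norm_of_nonneg (by positivity)]
  exact div_le_one_of_le₀ hk (by positivity)

lemma prod_range_abs_sub_eq_factorial_mul_factorial (k m : ℕ) :
    ∏ j ∈ Finset.range (k + m + 1), (if j = k then 1 else |(k : ℝ) - j|) = k ! * m ! := by
  induction k with
  | zero =>
    rw [Finset.prod_range_succ', zero_add, ← Finset.prod_range_add_one_eq_factorial m]
    simp only [Nat.add_eq_zero_iff, one_ne_zero, and_false, if_false, if_true, Nat.cast_zero,
      zero_sub, abs_neg, Nat.abs_cast, Nat.cast_prod, Nat.factorial_zero, Nat.cast_one,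
      mul_one, one_mul]
  | succ k ih =>
    rw [Finset.prod_range_succ', show k + 1 + m = k + m + 1 by ring]
    simp only [add_left_inj, Nat.cast_add, Nat.cast_one, add_sub_add_right_eq_sub, ih,
      (Nat.succ_ne_zero k).symm, if_false, Nat.cast_zero, sub_zero, Nat.factorial_succ,
      Nat.cast_mul, abs_of_nonneg (show (0 : ℝ) ≤ k + 1 by positivity)]
    ring

lemma prod_erase_abs_sub_eq_factorial_mul_factorial {N : ℕ} (k : Fin (N + 1)) :
    ∏ j ∈ Finset.univ.erase k, |(k : ℝ) - j| = (k : ℕ)! * (N - k)! := by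
  calc ∏ j ∈ Finset.univ.erase k, |(k : ℝ) - j|
      = ∏ j ∈ Finset.univ.erase k, (if (j : ℕ) = k then 1 else |(k : ℝ) - j|) :=
        Finset.prod_congr rfl fun j hj => by
          rw [if_neg fun h => Finset.ne_of_mem_erase hj (Fin.ext h)]
    _ = ∏ j : Fin (N + 1), (if (j : ℕ) = k then 1 else |(k : ℝ) - j|) :=
        Finset.prod_erase _ (if_pos rfl)
    _ = ∏ j ∈ Finset.range (k + (N - k) + 1), (if j = k then 1 else |(k : ℝ) - j|) := by
        rw [Nat.add_sub_cancel' (Nat.lt_succ_iff.1 k.2)]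
        exact Fin.prod_univ_eq_prod_range (fun j => if j = k then 1 else |(k : ℝ) - j|) (N + 1)
    _ = (k : ℕ)! * (N - k)! := prod_range_abs_sub_eq_factorial_mul_factorial k (N - k)

lemma lagrangeWeight_equispacedNode_le (N : ℕ) (k : Fin (N + 1)) :
    lagrangeWeight (equispacedNode N) k ≤ (2 * (N + 1)) ^ N / N ! * N.choose k := by
  calc lagrangeWeight (equispacedNode N) k
      ≤ ∏ j ∈ Finset.univ.erase k, (N + 1) * |(k : ℝ) - j|⁻¹ * 2 := by
        refine Finset.prod_le_prod (fun _ _ => by positivity) fun j _ => mul_le_mul (le_of_eq ?_)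
          (by linarith [norm_equispacedNode_le_one N j]) (by positivity) (by positivity)
        rw [equispacedNode, equispacedNode, ← sub_div, inv_div, norm_div, Real.norm_eq_abs,
          Real.norm_eq_abs, abs_of_nonneg (show (0 : ℝ) ≤ N + 1 by positivity), div_eq_mul_inv]
    _ = (2 * (N + 1)) ^ N / ((k : ℕ)! * (N - k)!) := by
        simp only [mul_right_comm _ _ (2 : ℝ), mul_comm _ (2 : ℝ)]
        rw [Finset.prod_mul_distrib, Finset.prod_inv_distrib,
          prod_erase_abs_sub_eq_factorial_mul_factorial]
        simp [div_eq_mul_inv]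
    _ = (2 * (N + 1)) ^ N / N ! * N.choose k := by
        rw [Nat.cast_choose ℝ (Nat.lt_succ_iff.1 k.2)]
        field_simp

lemma lebesgueWeight_equispacedNode_le (N : ℕ) :
    lebesgueWeight (equispacedNode N) ≤ 12 ^ (N + 1) := by
  have hchoose : ∑ k : Fin (N + 1), (N.choose k : ℝ) = 2 ^ N := by
    rw [Fin.sum_univ_eq_sum_range fun k => (N.choose k : ℝ)]
    exact_mod_cast Nat.sum_range_choose N
  have hexp : Real.exp (N + 1) ≤ 3 ^ (N + 1) := by
    have hcast : (N + 1 : ℝ) = ((N + 1 : ℕ) : ℝ) * 1 := by push_cast; ring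
    rw [hcast, Real.exp_nat_mul]
    gcongr
    linarith [Real.exp_one_lt_d9]
  calc lebesgueWeight (equispacedNode N)
      ≤ ∑ k : Fin (N + 1), (2 * (N + 1) : ℝ) ^ N / N ! * N.choose k :=
        Finset.sum_le_sum fun k _ => lagrangeWeight_equispacedNode_le N k
    _ = 4 ^ N * ((N + 1) ^ N / N !) := by
        rw [← Finset.mul_sum, hchoose, mul_pow, show (4 : ℝ) = 2 * 2 by norm_num, mul_pow]
        ring
    _ ≤ 4 ^ (N + 1) * 3 ^ (N + 1) := by
        gcongr
        · norm_num
        · omega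
        · exact (Real.pow_div_factorial_le_exp _ (by positivity) N).trans hexp
    _ = 12 ^ (N + 1) := by rw [← mul_pow]; norm_num

end EquispacedNodes

section InterpolationSeries

variable {n N : ℕ} {g : (Fin n → ℝ) → ℝ} {ε M ρ : ℝ}

lemma norm_sub_tensorInterpolate_equispacedNode_le (hε : 0 ≤ ε)
    (hg : ∀ i, CoordPolyApproxOn N ε (closedBall 0 1) i g) {x : Fin n → ℝ}
    (hx : x ∈ closedBall 0 1) :
    ‖g x - tensorInterpolate (equispacedNode N) g x‖ ≤ (12 ^ (N + 2)) ^ n * ε := by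
  refine (norm_sub_tensorInterpolate_le (equispacedNode_injective N)
    (norm_equispacedNode_le_one N) (by simp) hε hg hx).trans ?_
  have hweight := lebesgueWeight_equispacedNode_le N
  have hnonneg := lebesgueWeight_nonneg (equispacedNode N)
  have hone : (1 : ℝ) ≤ 12 ^ (N + 1) := one_le_pow₀ (by norm_num)
  gcongr
  rw [pow_succ (12 : ℝ) (N + 1)]
  linarith

lemma powerSeriesNormLE_tensorInterpolate_succ_sub (hε : 0 ≤ ε)
    (hg : ∀ i, CoordPolyApproxOn N ε (closedBall 0 1) i g) :
    PowerSeriesNormLE ℝ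
      (tensorInterpolate (equispacedNode (N + 1)) g - tensorInterpolate (equispacedNode N) g)
      ((12 ^ (N + 2)) ^ n * ε * (12 ^ (N + 2)) ^ n) := by
  have hinterpolate : tensorInterpolate (equispacedNode (N + 1)) g -
      tensorInterpolate (equispacedNode N) g = tensorInterpolate (equispacedNode (N + 1))
        (g - tensorInterpolate (equispacedNode N) g) := by
    rw [tensorInterpolate_sub, tensorInterpolate_tensorInterpolate (equispacedNode_injective N)
      (equispacedNode_injective (N + 1)) (by simp)]
  have hgrid (β : Fin n → Fin (N + 1 + 1)) : equispacedNode (N + 1) ∘ β ∈ closedBall 0 1 := by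
    rw [mem_closedBall_zero_iff, pi_norm_le_iff_of_nonneg zero_le_one]
    exact fun i => norm_equispacedNode_le_one (N + 1) (β i)
  rw [hinterpolate]
  refine (powerSeriesNormLE_tensorInterpolate (equispacedNode (N + 1)) fun β =>
    norm_sub_tensorInterpolate_equispacedNode_le hε hg (hgrid β)).mono ?_
  rw [Fintype.card_fin]
  gcongr
  · exact lebesgueWeight_nonneg _
  · exact lebesgueWeight_equispacedNode_le (N + 1)

lemma tendsto_tensorInterpolate_equispacedNode (hM : 0 ≤ M) (hρ : 0 ≤ ρ) (hρ1 : 12 ^ n * ρ < 1)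
    (hg : ∀ N i, CoordPolyApproxOn N (M * ρ ^ N) (closedBall 0 1) i g) {x : Fin n → ℝ}
    (hx : x ∈ closedBall 0 1) :
    Tendsto (fun N => tensorInterpolate (equispacedNode N) g x) atTop (𝓝 (g x)) := by
  have herror (N : ℕ) : ‖tensorInterpolate (equispacedNode N) g x - g x‖ ≤
      M * (12 ^ 2) ^ n * (12 ^ n * ρ) ^ N := by
    calc ‖tensorInterpolate (equispacedNode N) g x - g x‖ ≤ (12 ^ (N + 2)) ^ n * (M * ρ ^ N) :=
          norm_sub_rev (g x) _ ▸
            norm_sub_tensorInterpolate_equispacedNode_le (by positivity) (hg N) hx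
      _ = M * (12 ^ 2) ^ n * (12 ^ n * ρ) ^ N := by ring
  refine tendsto_iff_norm_sub_tendsto_zero.2 (squeeze_zero (fun _ => norm_nonneg _) herror ?_)
  simpa using (tendsto_pow_atTop_nhds_zero_of_lt_one (by positivity) hρ1).const_mul
    (M * (12 ^ 2) ^ n)

theorem analyticOnNhd_ball_of_coordPolyApproxOn (hM : 0 ≤ M) (hρ : 0 ≤ ρ)
    (hρ1 : 12 ^ (2 * n) * ρ < 1)
    (hg : ∀ N i, CoordPolyApproxOn N (M * ρ ^ N) (closedBall 0 1) i g) :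
    AnalyticOnNhd ℝ g (ball 0 1) := by
  set I : ℕ → (Fin n → ℝ) → ℝ := fun N => tensorInterpolate (equispacedNode N) g
  have hdiff (N : ℕ) : PowerSeriesNormLE ℝ (I (N + 1) - I N)
      (M * (12 ^ 2) ^ (2 * n) * (12 ^ (2 * n) * ρ) ^ N) :=
    (powerSeriesNormLE_tensorInterpolate_succ_sub (by positivity) (hg N)).mono
      (le_of_eq (by ring))
  have hsummable : Summable fun N : ℕ => M * (12 ^ 2) ^ (2 * n) * (12 ^ (2 * n) * ρ) ^ N :=
    (summable_geometric_of_lt_one (by positivity) hρ1).mul_left _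
  have htelescope (x) (hx : x ∈ ball (0 : Fin n → ℝ) 1) :
      HasSum (fun N => (I (N + 1) - I N) x) (g x - I 0 x) := by
    have hρn : 12 ^ n * ρ < 1 := by
      refine hρ1.trans_le' ?_
      gcongr
      · norm_num
      · omega
    refine (Summable.of_norm_bounded hsummable
      fun N => (hdiff N).norm_le hx).hasSum_iff_tendsto_nat.2 ?_
    simpa only [Pi.sub_apply, Finset.sum_range_sub fun N => I N x] using
      (tendsto_tensorInterpolate_equispacedNode hM hρ hρn hg
        (ball_subset_closedBall hx)).sub_const (I 0 x)
  have hremainder : AnalyticOnNhd ℝ (g - I 0) (ball 0 1) :=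
    (PowerSeriesNormLE.hasSum hdiff hsummable htelescope).analyticOnNhd
  obtain ⟨D, hD⟩ := (finite_range fun β => g (equispacedNode 0 ∘ β)).isBounded.exists_norm_le
  have hI0 : AnalyticOnNhd ℝ (I 0) (ball 0 1) :=
    (powerSeriesNormLE_tensorInterpolate _ fun β => hD _ (mem_range_self β)).analyticOnNhd
  simpa using hremainder.add hI0

theorem exists_analyticOnNhd_of_coordPolyApproxOn {f : (Fin n → ℝ) → ℝ} {W : Set (Fin n → ℝ)}
    (hW : IsOpen W) (hWne : W.Nonempty) (hM : 0 ≤ M) (hρ : 0 ≤ ρ) (hρ1 : 12 ^ (2 * n) * ρ < 1)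
    (hf : ∀ N i, CoordPolyApproxOn N (M * ρ ^ N) W i f) :
    ∃ U₀ ⊆ W, U₀.Nonempty ∧ IsOpen U₀ ∧ AnalyticOnNhd ℝ f U₀ := by
  obtain ⟨c, hc⟩ := hWne
  obtain ⟨δ, hδ, hδW⟩ := nhds_basis_closedBall.mem_iff.1 (hW.mem_nhds hc)
  have hmaps : MapsTo (fun x => c + δ • x) (closedBall 0 1) W := by
    intro x hx
    refine hδW (mem_closedBall_iff_norm.2 ?_)
    rw [add_sub_cancel_left, norm_smul, Real.norm_of_nonneg hδ.le]
    exact mul_le_of_le_one_right hδ.le (mem_closedBall_zero_iff.1 hx)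
  have hrescaled : AnalyticOnNhd ℝ (fun x => f (c + δ • x)) (ball 0 1) :=
    analyticOnNhd_ball_of_coordPolyApproxOn hM hρ hρ1 fun N i => (hf N i).comp_affine c δ hmaps
  have hinverse : AnalyticOnNhd ℝ (fun y : Fin n → ℝ => δ⁻¹ • (y - c)) (ball c δ) :=
    fun y _ => by fun_prop
  have hmapsinv : MapsTo (fun y : Fin n → ℝ => δ⁻¹ • (y - c)) (ball c δ) (ball 0 1) := by
    intro y hy
    rw [mem_ball_zero_iff, norm_smul, norm_inv, Real.norm_of_nonneg hδ.le, inv_mul_lt_iff₀ hδ,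
      mul_one]
    exact mem_ball_iff_norm.1 hy
  refine ⟨ball c δ, ball_subset_closedBall.trans hδW, nonempty_ball.2 hδ, isOpen_ball, ?_⟩
  simpa [Function.comp_def, smul_inv_smul₀ hδ.ne'] using hrescaled.comp hinverse hmapsinv

end InterpolationSeries

section Baire

variable {X T : Type*} [TopologicalSpace X] [TopologicalSpace T]

lemma exists_isOpen_subset_closure_of_subset_iUnion [BaireSpace X] {ι : Type*} [Countable ι]
    {V : Set X} (hV : IsOpen V) (hVne : V.Nonempty) {F : ι → Set X} (hF : V ⊆ ⋃ k, F k) :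
    ∃ k, ∃ W ⊆ V, IsOpen W ∧ W.Nonempty ∧ W ⊆ closure (F k) := by
  obtain ⟨k, hk⟩ : ∃ k, ¬ IsNowhereDense (V ∩ F k) := by
    by_contra! hnowhere
    refine not_isMeagre_of_isOpen hV hVne ?_
    rw [← inter_eq_left.2 hF, inter_iUnion]
    exact isMeagre_iUnion fun k => (hnowhere k).isMeagre
  obtain ⟨x, hx⟩ := nonempty_iff_ne_empty.2 hk
  have hmeet : (interior (closure (V ∩ F k)) ∩ (V ∩ F k)).Nonempty :=
    mem_closure_iff.1 (interior_subset hx) _ isOpen_interior hx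
  refine ⟨k, V ∩ interior (closure (V ∩ F k)), inter_subset_left, hV.inter isOpen_interior, ?_,
    inter_subset_right.trans (interior_subset.trans (closure_mono inter_subset_right))⟩
  exact hmeet.mono fun y hy => ⟨hy.2.1, hy.1⟩

lemma exists_isOpen_subset_closure_continuousOn [BaireSpace T] [SecondCountableTopology X]
    {Y : Type*} [TopologicalSpace Y] {F : T → X → Y} {J : Set T} {Q : Set X} (hJ : IsOpen J)
    (hJne : J.Nonempty)
    (hF : ∀ t ∈ J, ∃ V ⊆ Q, V.Nonempty ∧ IsOpen V ∧ ContinuousOn (F t) V) :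
    ∃ J' ⊆ J, IsOpen J' ∧ J'.Nonempty ∧ ∃ V ⊆ Q, IsOpen V ∧ V.Nonempty ∧
      J' ⊆ closure {t | ContinuousOn (F t) V} := by
  have hbasis := TopologicalSpace.isBasis_countableBasis X
  have : Countable {V // V ∈ TopologicalSpace.countableBasis X ∧ V ⊆ Q} :=
    ((TopologicalSpace.countable_countableBasis X).mono fun _ hV => hV.1).to_subtype
  have hcover : J ⊆ ⋃ V : {V // V ∈ TopologicalSpace.countableBasis X ∧ V ⊆ Q},
      {t | ContinuousOn (F t) V} := by
    intro t ht
    obtain ⟨V, hVQ, ⟨x, hx⟩, hV, hcont⟩ := hF t ht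
    obtain ⟨B, hB, -, hBV⟩ := hbasis.exists_subset_of_mem_open hx hV
    exact mem_iUnion.2 ⟨⟨B, hB, hBV.trans hVQ⟩, hcont.mono hBV⟩
  obtain ⟨⟨V, hVbasis, hVQ⟩, J', hJ'J, hJ', hJ'ne, hdense⟩ :=
    exists_isOpen_subset_closure_of_subset_iUnion hJ hJne hcover
  exact ⟨J', hJ'J, hJ', hJ'ne, V, hVQ, hbasis.isOpen hVbasis,
    TopologicalSpace.nonempty_of_mem_countableBasis hVbasis, hdense⟩

end Baire

section GeometricExpansion

/-- `h` is approximated on `S` at rate `K * ρ ^ N` by the partial sums of a formal power series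
at `c` with geometrically bounded coefficients. The bound on the coefficients makes this notion
closed under pointwise limits. -/
def HasGeometricExpansionOn {𝕜 : Type*} [NormedField 𝕜] (c : 𝕜) (K ρ : ℝ) (S : Set 𝕜)
    (h : 𝕜 → 𝕜) : Prop :=
  ∃ a : ℕ → 𝕜, (∀ m, ‖a m‖ ≤ K ^ (m + 1)) ∧
    ∀ N, ∀ t ∈ S, ‖h t - ∑ m ∈ Finset.range N, a m * (t - c) ^ m‖ ≤ K * ρ ^ N

section NormedField

variable {𝕜 : Type*} [NormedField 𝕜] {c : 𝕜} {K ρ : ℝ} {S : Set 𝕜} {h : 𝕜 → 𝕜}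

lemma HasGeometricExpansionOn.mono {S' : Set 𝕜} (hh : HasGeometricExpansionOn c K ρ S h)
    (hS : S' ⊆ S) : HasGeometricExpansionOn c K ρ S' h := by
  obtain ⟨a, ha, happrox⟩ := hh
  exact ⟨a, ha, fun N t ht => happrox N t (hS ht)⟩

lemma HasGeometricExpansionOn.polyApproxOn (hh : HasGeometricExpansionOn c K ρ S h) (N : ℕ) :
    PolyApproxOn N (K * ρ ^ N) S h := by
  obtain ⟨a, -, happrox⟩ := hh
  refine ⟨∑ m ∈ Finset.range N, C (a m) * (X - C c) ^ m, ?_, fun t ht => ?_⟩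
  · refine natDegree_sum_le_of_forall_le _ _ fun m hm => (natDegree_C_mul_le _ _).trans ?_
    rw [natDegree_pow, natDegree_X_sub_C, mul_one]
    exact (Finset.mem_range.1 hm).le
  · simpa [eval_finsetSum] using happrox N t ht

lemma HasGeometricExpansionOn.of_subset_closure (hh : HasGeometricExpansionOn c K ρ S h)
    {S' : Set 𝕜} (hSS' : S ⊆ S') (hS' : S' ⊆ closure S) (hcont : ContinuousOn h S') :
    HasGeometricExpansionOn c K ρ S' h := by
  obtain ⟨a, ha, happrox⟩ := hh
  refine ⟨a, ha, fun N t ht => ?_⟩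
  have hdiff : ContinuousWithinAt
      (fun s => ‖h s - ∑ m ∈ Finset.range N, a m * (s - c) ^ m‖) S t :=
    (((hcont t ht).mono hSS').sub
      (by refine Continuous.continuousWithinAt ?_; fun_prop)).norm
  exact hdiff.closure_le (hS' ht) continuousWithinAt_const (happrox N)

lemma HasGeometricExpansionOn.of_tendsto [ProperSpace 𝕜] {X : Type*} {l : Filter X} [l.NeBot]
    {H : X → 𝕜 → 𝕜} (hH : ∀ᶠ y in l, HasGeometricExpansionOn c K ρ S (H y))
    (hlim : ∀ t ∈ S, Tendsto (fun y => H y t) l (𝓝 (h t))) :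
    HasGeometricExpansionOn c K ρ S h := by
  obtain ⟨a, ha⟩ := hH.choice
  let 𝒰 := Ultrafilter.of l
  have h𝒰 : (𝒰 : Filter X) ≤ l := Ultrafilter.of_le l
  have hcompact : IsCompact (univ.pi fun m : ℕ => closedBall (0 : 𝕜) (K ^ (m + 1))) :=
    isCompact_univ_pi fun m => isCompact_closedBall _ _
  have hmem : ∀ᶠ y in 𝒰, a y ∈ univ.pi fun m : ℕ => closedBall (0 : 𝕜) (K ^ (m + 1)) :=
    (ha.filter_mono h𝒰).mono fun y hy m _ => mem_closedBall_zero_iff.2 (hy.1 m)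
  obtain ⟨b, hb, hab⟩ := hcompact.ultrafilter_le_nhds' (𝒰.map a) hmem
  have hlimcoeff (m : ℕ) : Tendsto (fun y => a y m) 𝒰 (𝓝 (b m)) := tendsto_pi_nhds.1 hab m
  refine ⟨b, fun m => mem_closedBall_zero_iff.1 (hb m (mem_univ m)), fun N t ht => ?_⟩
  have hlimdiff : Tendsto (fun y => ‖H y t - ∑ m ∈ Finset.range N, a y m * (t - c) ^ m‖) 𝒰
      (𝓝 ‖h t - ∑ m ∈ Finset.range N, b m * (t - c) ^ m‖) :=
    (((hlim t ht).mono_left h𝒰).sub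
      (tendsto_finsetSum _ fun m _ => (hlimcoeff m).mul_const _)).norm
  exact le_of_tendsto hlimdiff ((ha.filter_mono h𝒰).mono fun y hy => hy.2 N t ht)

end NormedField

variable {𝕜 : Type*} [NontriviallyNormedField 𝕜] {ρ : ℝ}

lemma exists_hasGeometricExpansionOn_of_analyticAt {h : 𝕜 → 𝕜} {c : 𝕜} (hh : AnalyticAt 𝕜 h c)
    (hρ : 0 < ρ) : ∃ k : ℕ, HasGeometricExpansionOn c k ρ (ball c (1 / (k + 1))) h := by
  obtain ⟨p, R, hp⟩ := hh
  obtain ⟨r, hr0, hrR⟩ := ENNReal.lt_iff_exists_nnreal_btwn.1 hp.r_pos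
  have hr : (0 : ℝ) < r := by exact_mod_cast hr0
  obtain ⟨b, ⟨hb0, hb1⟩, C₁, -, happrox⟩ := hp.uniform_geometric_approx' hrR
  obtain ⟨C₂, -, hcoeff⟩ := p.norm_mul_pow_le_of_lt_radius (hrR.trans_le hp.r_le)
  obtain ⟨k, hk⟩ := exists_nat_ge (max (max C₁ C₂) (max (1 / r) (1 / (ρ * r))))
  simp only [max_le_iff, div_le_iff₀ hr, div_le_iff₀ (mul_pos hρ hr)] at hk
  obtain ⟨⟨hkC₁, hkC₂⟩, hkr, hkρ⟩ := hk
  refine ⟨k, p.coeff, fun m => ?_, fun N t ht => ?_⟩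
  · calc ‖p.coeff m‖ = ‖p m‖ := FormalMultilinearSeries.norm_apply_eq_norm_coef.symm
      _ ≤ ‖p m‖ * (k * r) ^ m := le_mul_of_one_le_right (norm_nonneg _) (one_le_pow₀ hkr)
      _ = ‖p m‖ * r ^ m * k ^ m := by ring
      _ ≤ k * k ^ m := by gcongr; exact (hcoeff m).trans hkC₂
      _ = k ^ (m + 1) := by ring
  · rw [mem_ball_iff_norm, lt_div_iff₀ (by positivity)] at ht
    have htr : ‖t - c‖ < r := by nlinarith [norm_nonneg (t - c)]
    have htρ : ‖t - c‖ / r ≤ ρ := by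
      rw [div_le_iff₀ hr]
      nlinarith [norm_nonneg (t - c), mul_pos hρ hr]
    have hpartial : p.partialSum N (t - c) = ∑ m ∈ Finset.range N, p.coeff m * (t - c) ^ m := by
      simp only [FormalMultilinearSeries.partialSum,
        FormalMultilinearSeries.apply_eq_pow_smul_coeff, smul_eq_mul, mul_comm]
    have hbound := happrox (t - c) (mem_ball_zero_iff.2 htr) N
    rw [add_sub_cancel, hpartial] at hbound
    refine hbound.trans ?_
    gcongr
    exact (mul_le_of_le_one_left (by positivity) hb1.le).trans htρ

variable [ProperSpace 𝕜] {X : Type*} [TopologicalSpace X] [BaireSpace X] {F : 𝕜 → X → 𝕜}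
  {V : Set X}

lemma exists_isOpen_forall_hasGeometricExpansionOn_inter {E : Set 𝕜} {c : 𝕜} (hV : IsOpen V)
    (hVne : V.Nonempty) (hcont : ∀ t ∈ E, ContinuousOn (F t) V)
    (han : ∀ y ∈ V, AnalyticAt 𝕜 (fun t => F t y) c) (hρ : 0 < ρ) :
    ∃ k : ℕ, ∃ Q ⊆ V, IsOpen Q ∧ Q.Nonempty ∧ ∀ y ∈ Q,
      HasGeometricExpansionOn c k ρ (ball c (1 / (k + 1)) ∩ E) fun t => F t y := by
  have hcover : V ⊆ ⋃ k : ℕ,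
      {y | HasGeometricExpansionOn c k ρ (ball c (1 / (k + 1)) ∩ E) fun t => F t y} := by
    intro y hy
    obtain ⟨k, hk⟩ := exists_hasGeometricExpansionOn_of_analyticAt (han y hy) hρ
    exact mem_iUnion.2 ⟨k, hk.mono inter_subset_left⟩
  obtain ⟨k, Q, hQV, hQ, hQne, hdense⟩ :=
    exists_isOpen_subset_closure_of_subset_iUnion hV hVne hcover
  refine ⟨k, Q, hQV, hQ, hQne, fun y hy => ?_⟩
  have := mem_closure_iff_nhdsWithin_neBot.1 (hdense hy)
  refine .of_tendsto (l := 𝓝[_] y) (H := fun z t => F t z) self_mem_nhdsWithin fun t ht => ?_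
  exact ((hcont t ht.2).continuousAt (hV.mem_nhds (hQV hy))).tendsto.mono_left inf_le_left

lemma exists_isOpen_forall_polyApproxOn {J E : Set 𝕜} (hJ : IsOpen J) (hJne : J.Nonempty)
    (hJE : J ⊆ closure E) (hV : IsOpen V) (hVne : V.Nonempty)
    (hcont : ∀ t ∈ E, ContinuousOn (F t) V)
    (han : ∀ t ∈ J, ∀ y ∈ V, AnalyticAt 𝕜 (fun t => F t y) t) (hρ : 0 < ρ) :
    ∃ J' ⊆ J, IsOpen J' ∧ J'.Nonempty ∧ ∃ Q ⊆ V, IsOpen Q ∧ Q.Nonempty ∧ ∃ M : ℝ, 0 ≤ M ∧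
      ∀ y ∈ Q, ∀ N, PolyApproxOn N (M * ρ ^ N) J' fun t => F t y := by
  obtain ⟨c, hc⟩ := hJne
  obtain ⟨k, Q, hQV, hQ, hQne, hexpansion⟩ :=
    exists_isOpen_forall_hasGeometricExpansionOn_inter hV hVne hcont (han c hc) hρ
  set J' := J ∩ ball c (1 / (k + 1))
  have hJ' : IsOpen J' := hJ.inter isOpen_ball
  refine ⟨J', inter_subset_left, hJ', ⟨c, hc, mem_ball_self (by positivity)⟩, Q, hQV, hQ, hQne,
    k, k.cast_nonneg, fun y hy => ?_⟩
  have hdense : J' ⊆ closure (J' ∩ E) := fun t ht => hJ'.inter_closure ⟨ht, hJE ht.1⟩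
  have hcontinuous : ContinuousOn (fun t => F t y) J' :=
    fun t ht => (han t ht.1 y (hQV hy)).continuousAt.continuousWithinAt
  exact (((hexpansion y hy).mono (inter_subset_inter_left _ inter_subset_right)).of_subset_closure
    inter_subset_left hdense hcontinuous).polyApproxOn

end GeometricExpansion

section SeparatelyAnalytic

lemma exists_isOpen_forall_insertNth_mem {R : Type*} [TopologicalSpace R] {n : ℕ}
    {U : Set (Fin (n + 1) → R)} (hU : IsOpen U) (hUne : U.Nonempty) (i : Fin (n + 1)) :
    ∃ J : Set R, IsOpen J ∧ J.Nonempty ∧ ∃ Q : Set (Fin n → R), IsOpen Q ∧ Q.Nonempty ∧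
      ∀ t ∈ J, ∀ y ∈ Q, i.insertNth t y ∈ U := by
  obtain ⟨x, hx⟩ := hUne
  have hcont : Continuous fun q : R × (Fin n → R) => (i.insertNth q.1 q.2 : Fin (n + 1) → R) :=
    Continuous.finInsertNth (A := fun _ => R) i continuous_fst continuous_snd
  obtain ⟨J, Q, hJ, hQ, hxJ, hxQ, hJQ⟩ := isOpen_prod_iff.1 (hU.preimage hcont) (x i)
    (i.removeNth x) (by simpa using hx)
  exact ⟨J, hJ, ⟨_, hxJ⟩, Q, hQ, ⟨_, hxQ⟩, fun t ht y hy => hJQ (mk_mem_prod ht hy)⟩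

/-- `f` is analytic in each variable separately at every point of `U`. -/
def SeparatelyAnalyticOn (𝕜 : Type*) [NontriviallyNormedField 𝕜] {ι : Type*} [DecidableEq ι]
    (f : (ι → 𝕜) → 𝕜) (U : Set (ι → 𝕜)) : Prop :=
  ∀ x ∈ U, ∀ i, AnalyticAt 𝕜 (fun t => f (Function.update x i t)) (x i)

variable {𝕜 : Type*} [NontriviallyNormedField 𝕜]

lemma SeparatelyAnalyticOn.mono {ι : Type*} [DecidableEq ι] {f : (ι → 𝕜) → 𝕜}
    {U U' : Set (ι → 𝕜)} (hf : SeparatelyAnalyticOn 𝕜 f U) (hU : U' ⊆ U) :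
    SeparatelyAnalyticOn 𝕜 f U' :=
  fun x hx => hf x (hU hx)

lemma separatelyAnalyticOn_of_analyticOn_lines {ι : Type*} [DecidableEq ι]
    {f : (ι → 𝕜) → 𝕜} {U : Set (ι → 𝕜)} (hU : IsOpen U)
    (hlines : ∀ x ∈ U, ∀ i, AnalyticOn 𝕜 (fun t : 𝕜 => f (x + t • (Pi.single i 1 : ι → 𝕜)))
      {t | x + t • (Pi.single i 1 : ι → 𝕜) ∈ U}) :
    SeparatelyAnalyticOn 𝕜 f U := by
  intro x hx i
  have hopen : IsOpen {t : 𝕜 | x + t • (Pi.single i 1 : ι → 𝕜) ∈ U} :=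
    hU.preimage (by fun_prop)
  have hline : AnalyticAt 𝕜 (fun t : 𝕜 => f (x + t • (Pi.single i 1 : ι → 𝕜))) (x i - x i) :=
    hopen.analyticOn_iff_analyticOnNhd.1 (hlines x hx i) _ (by simpa using hx)
  have hupdate (s : 𝕜) :
      Function.update x i s = x + (s - x i) • (Pi.single i 1 : ι → 𝕜) := by
    rw [← Pi.single_smul, smul_eq_mul, mul_one]
    ext j
    obtain rfl | hj := eq_or_ne j i <;> simp [*]
  simp only [hupdate]
  exact hline.fun_comp (f := fun s => s - x i) (by fun_prop)

section Slices

variable {n : ℕ} {f : (Fin (n + 1) → 𝕜) → 𝕜} {U : Set (Fin (n + 1) → 𝕜)} {i : Fin (n + 1)}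

lemma SeparatelyAnalyticOn.insertNth (hf : SeparatelyAnalyticOn 𝕜 f U) {t : 𝕜}
    {Q : Set (Fin n → 𝕜)} (hQ : ∀ y ∈ Q, i.insertNth t y ∈ U) :
    SeparatelyAnalyticOn 𝕜 (fun y => f (i.insertNth t y)) Q := by
  intro y hy j
  simpa using hf _ (hQ y hy) (i.succAbove j)

lemma SeparatelyAnalyticOn.analyticAt_insertNth (hf : SeparatelyAnalyticOn 𝕜 f U) {t : 𝕜}
    {y : Fin n → 𝕜} (hty : i.insertNth t y ∈ U) :
    AnalyticAt 𝕜 (fun s => f (i.insertNth s y)) t := by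
  simpa using hf _ hty i

variable [ProperSpace 𝕜] {ρ : ℝ}

lemma SeparatelyAnalyticOn.exists_coordPolyApproxOn
    (hcont : ∀ (g : (Fin n → 𝕜) → 𝕜) (Q : Set (Fin n → 𝕜)), IsOpen Q → Q.Nonempty →
      SeparatelyAnalyticOn 𝕜 g Q → ∃ V ⊆ Q, V.Nonempty ∧ IsOpen V ∧ ContinuousOn g V)
    (hf : SeparatelyAnalyticOn 𝕜 f U) (hU : IsOpen U) (hUne : U.Nonempty) (hρ : 0 < ρ)
    (i : Fin (n + 1)) :
    ∃ W ⊆ U, IsOpen W ∧ W.Nonempty ∧ ∃ M : ℝ, 0 ≤ M ∧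
      ∀ N, CoordPolyApproxOn N (M * ρ ^ N) W i f := by
  obtain ⟨J, hJ, hJne, Q, hQ, hQne, hJQ⟩ := exists_isOpen_forall_insertNth_mem hU hUne i
  obtain ⟨J₁, hJ₁J, hJ₁, hJ₁ne, V, hVQ, hV, hVne, hdense⟩ :=
    exists_isOpen_subset_closure_continuousOn (F := fun t y => f (i.insertNth t y)) hJ hJne
      fun t ht => hcont _ Q hQ hQne (hf.insertNth (hJQ t ht))
  obtain ⟨J₂, hJ₂J₁, hJ₂, hJ₂ne, Q₂, hQ₂V, hQ₂, hQ₂ne, M, hM, happrox⟩ :=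
    exists_isOpen_forall_polyApproxOn hJ₁ hJ₁ne hdense hV hVne (fun _ ht => ht)
      (fun t ht y hy => hf.analyticAt_insertNth (hJQ t (hJ₁J ht) y (hVQ hy))) hρ
  refine ⟨{x | x i ∈ J₂ ∧ i.removeNth x ∈ Q₂}, fun x hx => ?_, ?_, ?_, M, hM,
    fun N => coordPolyApproxOn_of_insertNth fun y hy => happrox y hy N⟩
  · simpa using hJQ _ (hJ₁J (hJ₂J₁ hx.1)) _ (hVQ (hQ₂V hx.2))
  · refine (hJ₂.preimage (continuous_apply i)).inter (hQ₂.preimage ?_)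
    exact continuous_pi fun j => continuous_apply (i.succAbove j)
  · obtain ⟨⟨t, ht⟩, ⟨y, hy⟩⟩ := And.intro hJ₂ne hQ₂ne
    exact ⟨i.insertNth t y, by simpa using ht, by simpa using hy⟩

end Slices

lemma exists_forall_coordPolyApproxOn {𝕜 ι : Type*} [NormedField 𝕜] [DecidableEq ι]
    {f : (ι → 𝕜) → 𝕜} {U : Set (ι → 𝕜)} {ρ : ℝ} (hρ : 0 ≤ ρ) (hU : IsOpen U)
    (hUne : U.Nonempty)
    (hf : ∀ i, ∀ W ⊆ U, IsOpen W → W.Nonempty → ∃ W' ⊆ W, IsOpen W' ∧ W'.Nonempty ∧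
      ∃ M : ℝ, 0 ≤ M ∧ ∀ N, CoordPolyApproxOn N (M * ρ ^ N) W' i f) (s : Finset ι) :
    ∃ W ⊆ U, IsOpen W ∧ W.Nonempty ∧ ∃ M : ℝ, 0 ≤ M ∧
      ∀ N, ∀ i ∈ s, CoordPolyApproxOn N (M * ρ ^ N) W i f := by
  induction s using Finset.induction_on with
  | empty => exact ⟨U, subset_rfl, hU, hUne, 0, le_rfl, by simp⟩
  | insert i s _ ih =>
    obtain ⟨W, hWU, hW, hWne, M, hM, happrox⟩ := ih
    obtain ⟨W', hW'W, hW', hW'ne, M', hM', happrox'⟩ := hf i W hWU hW hWne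
    refine ⟨W', hW'W.trans hWU, hW', hW'ne, M + M', add_nonneg hM hM', fun N j hj => ?_⟩
    obtain rfl | hj := Finset.mem_insert.1 hj
    · exact (happrox' N).mono (by gcongr; linarith) subset_rfl
    · exact (happrox N j hj).mono (by gcongr; linarith) hW'W

theorem SeparatelyAnalyticOn.exists_analyticOnNhd {n : ℕ} {f : (Fin n → ℝ) → ℝ}
    {U : Set (Fin n → ℝ)} (hf : SeparatelyAnalyticOn ℝ f U) (hU : IsOpen U)
    (hUne : U.Nonempty) :
    ∃ U₀ ⊆ U, U₀.Nonempty ∧ IsOpen U₀ ∧ AnalyticOnNhd ℝ f U₀ := by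
  induction n with
  | zero =>
    have hconst : f = fun _ => f 0 := funext fun x => congrArg f (Subsingleton.elim x 0)
    exact ⟨U, subset_rfl, hUne, hU, hconst ▸ analyticOnNhd_const⟩
  | succ n ih =>
    obtain ⟨ρ, hρ0, hρ⟩ : ∃ ρ : ℝ, 0 < ρ ∧ ρ < (12 ^ (2 * (n + 1)))⁻¹ :=
      exists_between (by positivity)
    have hρ1 : 12 ^ (2 * (n + 1)) * ρ < 1 := by
      rwa [← lt_inv_mul_iff₀ (by positivity), mul_one]
    have hcont (g : (Fin n → ℝ) → ℝ) (Q : Set (Fin n → ℝ)) (hQ : IsOpen Q) (hQne : Q.Nonempty)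
        (hg : SeparatelyAnalyticOn ℝ g Q) :
        ∃ V ⊆ Q, V.Nonempty ∧ IsOpen V ∧ ContinuousOn g V := by
      obtain ⟨V, hVQ, hVne, hV, hgV⟩ := ih hg hQ hQne
      exact ⟨V, hVQ, hVne, hV, hgV.continuousOn⟩
    obtain ⟨W, hWU, hW, hWne, M, hM, happrox⟩ := exists_forall_coordPolyApproxOn hρ0.le hU hUne
      (fun i W hWU hW hWne => (hf.mono hWU).exists_coordPolyApproxOn hcont hW hWne hρ0 i)
      Finset.univ
    obtain ⟨U₀, hU₀W, hU₀⟩ := exists_analyticOnNhd_of_coordPolyApproxOn hW hWne hM hρ0.le hρ1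
      fun N i => happrox N i (Finset.mem_univ i)
    exact ⟨U₀, hU₀W.trans hWU, hU₀⟩

end SeparatelyAnalytic

/-- **Siciak–Błocki theorem (Theorem 3.1).** If `f : U → ℝ`, defined on a nonempty open
set `U ⊆ ℝⁿ`, is real-analytic on every open interval contained in `U` and parallel to
one of the coordinate axes, then `f` is real-analytic on some nonempty open `U₀ ⊆ U`. -/
theorem siciak_blocki_separately_analytic_on_lines
    (n : ℕ) (U : Set (Fin n → ℝ)) (hU : IsOpen U) (hne : U.Nonempty)
    (f : (Fin n → ℝ) → ℝ)
    (hlines : ∀ x ∈ U, ∀ i : Fin n,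
      AnalyticOn ℝ (fun t : ℝ => f (x + t • (Pi.single i 1 : Fin n → ℝ)))
        {t : ℝ | x + t • (Pi.single i 1 : Fin n → ℝ) ∈ U}) :
    ∃ U₀ : Set (Fin n → ℝ), U₀ ⊆ U ∧ U₀.Nonempty ∧ IsOpen U₀ ∧ AnalyticOn ℝ f U₀ := by
  have hf : SeparatelyAnalyticOn ℝ f U := separatelyAnalyticOn_of_analyticOn_lines hU hlines
  obtain ⟨U₀, hU₀U, hU₀ne, hU₀, hanalytic⟩ := hf.exists_analyticOnNhd hU hne
  exact ⟨U₀, hU₀U, hU₀ne, hU₀, hanalytic.analyticOn⟩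
end

section
/- Let n ≥ 2, let U ⊆ ℝ^n be a nonempty connected open set, and let f : U → ℝ. Then the following are equivalent: (a) f is regular on U; (b) for all a, v, w ∈ ℝ^n with v, w linearly independent and every (s₀,t₀) ∈ ℝ² with a + s₀·v + t₀·w ∈ U, there exist two-variable real polynomials p, q with q(s₀,t₀) ≠ 0 such that f(a + s·v + t·w) = p(s,t)/q(s,t) for every (s,t) lying in the connected component of {(s,t) ∈ ℝ² : a + s·v + t·w ∈ U} containing (s₀,t₀) and satisfying q(s,t) ≠ 0. (Theorem 8.1.) -/
open MvPolynomial

/-- `f` is regular on `W ⊆ ℝⁿ`: at every point of `W` it is represented by a quotient of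
real polynomials whose denominator does not vanish at that point. -/
def IsRegularOnReal (n : ℕ) (W : Set (Fin n → ℝ)) (f : (Fin n → ℝ) → ℝ) : Prop :=
  ∀ x ∈ W, ∃ p q : MvPolynomial (Fin n) ℝ, eval x q ≠ 0 ∧
    ∀ y ∈ W, eval y q ≠ 0 → f y = eval y p / eval y q

/-!
A function that is a fraction in each variable separately on a box is a fraction on the box. By
induction, `f (y, x) = p_y(x) / q_y(x)` for each value `y` of the first variable; infinitely many of
these pairs have their exponents in a common finite set, and a linear system over `K[y]` which has a
nonzero solution at infinitely many specialisations of `y` has a nonzero solution over `K[y]`. Hence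
regularity along lines makes `f` locally a fraction, and connectedness of `U` propagates one reduced
fraction `P / Q` to all of `U`.

Suppose `Q x = 0` with `x ∈ U`, so that also `P x = 0`. Choose `w` with `Q (x + w) ≠ 0`. As `P` and
`Q` are relatively prime, there is a Bézout relation `A P(y + t w) + B Q(y + t w) = ρ(y) ≠ 0`;
choose `v` with `ρ (x + v) ≠ 0`. On the plane `x + s v + t w` the right-hand side becomes a nonzero
polynomial in `s` alone, so the only common factors of `P` and `Q` through the origin are powers of
`s`, and `s` does not divide `Q` because `Q (x + w) ≠ 0`. Thus `P / Q` is already reduced at the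
origin of this plane, and it has a pole there, contradicting the regularity of `f` on the plane.
-/

open scoped Polynomial

section Bezout

variable {R : Type*} [CommRing R] [IsDomain R]

theorem isRelPrime_polynomial_C {p q : R} (hpq : IsRelPrime p q) (hq : q ≠ 0) :
    IsRelPrime (Polynomial.C p) (Polynomial.C q) := by
  intro d hdp hdq
  have hd : d.natDegree ≤ 0 := by
    simpa using Polynomial.natDegree_le_of_dvd hdq (Polynomial.C_ne_zero.2 hq)
  rw [Polynomial.eq_C_of_natDegree_le_zero hd, Polynomial.C_dvd_iff_dvd_coeff] at hdp hdq
  rw [Polynomial.eq_C_of_natDegree_le_zero hd, Polynomial.isUnit_C]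
  exact hpq (by simpa using hdp 0) (by simpa using hdq 0)

theorem exists_isPrimitive_map_dvd [NormalizedGCDMonoid R] {d : (FractionRing R)[X]}
    (hd : d ≠ 0) :
    ∃ N : R[X], N.IsPrimitive ∧ N.map (algebraMap R (FractionRing R)) ∣ d ∧
      (IsUnit N → IsUnit d) := by
  obtain ⟨c, hc, hcd⟩ := IsLocalization.integerNormalization_spec (nonZeroDivisors R) d
  set N := IsLocalization.integerNormalization (nonZeroDivisors R) d
  refine ⟨N.primPart, N.isPrimitive_primPart, ?_,
    Polynomial.isUnit_or_eq_zero_of_isUnit_integerNormalization_primPart hd⟩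
  have hc_unit : IsUnit (Polynomial.C (algebraMap R (FractionRing R) c)) :=
    Polynomial.isUnit_C.2
      (IsFractionRing.to_map_ne_zero_of_mem_nonZeroDivisors hc).isUnit
  rw [← hc_unit.dvd_mul_left, ← Polynomial.algebraMap_apply, ← Algebra.smul_def, ← hcd]
  exact Polynomial.map_dvd _ N.primPart_dvd

theorem isCoprime_map_fractionRing [NormalizedGCDMonoid R] {p q : R[X]}
    (hpq : IsRelPrime p q) :
    IsCoprime (p.map (algebraMap R (FractionRing R)))
      (q.map (algebraMap R (FractionRing R))) := by
  refine IsRelPrime.isCoprime fun d hdp hdq => ?_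
  have hd : d ≠ 0 := by
    rintro rfl
    rw [zero_dvd_iff, Polynomial.map_eq_zero_iff (IsFractionRing.injective R _)] at hdp hdq
    subst hdp hdq
    exact Polynomial.not_isUnit_X (hpq (dvd_zero _) (dvd_zero _))
  obtain ⟨N, hN, hNd, hunit⟩ := exists_isPrimitive_map_dvd hd
  exact hunit (hpq (hN.dvd_of_fraction_map_dvd_fraction_map (hNd.trans hdp))
    (hN.dvd_of_fraction_map_dvd_fraction_map (hNd.trans hdq)))

theorem exists_mul_add_mul_eq_C [UniqueFactorizationMonoid R] {p q : R[X]}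
    (hpq : IsRelPrime p q) :
    ∃ (a b : R[X]) (r : R), r ≠ 0 ∧ a * p + b * q = Polynomial.C r := by
  classical
  let : StrongNormalizationMonoid R := UniqueFactorizationMonoid.strongNormalizationMonoid
  let : NormalizedGCDMonoid R := UniqueFactorizationMonoid.toNormalizedGCDMonoid R
  obtain ⟨u, v, huv⟩ := isCoprime_map_fractionRing hpq
  obtain ⟨c, hc, hcu⟩ := IsLocalization.integerNormalization_spec (nonZeroDivisors R) u
  obtain ⟨d, hd, hdv⟩ := IsLocalization.integerNormalization_spec (nonZeroDivisors R) v
  refine ⟨Polynomial.C d * IsLocalization.integerNormalization (nonZeroDivisors R) u,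
    Polynomial.C c * IsLocalization.integerNormalization (nonZeroDivisors R) v, c * d,
    mul_ne_zero (nonZeroDivisors.ne_zero hc) (nonZeroDivisors.ne_zero hd),
    Polynomial.map_injective _ (IsFractionRing.injective R (FractionRing R)) ?_⟩
  simp only [Polynomial.map_add, Polynomial.map_mul, Polynomial.map_C, hcu, hdv,
    Algebra.smul_def, Polynomial.algebraMap_apply, map_mul]
  linear_combination Polynomial.C (algebraMap R (FractionRing R) c) *
    Polynomial.C (algebraMap R (FractionRing R) d) * huv

theorem map_eq_zero_of_bezout_prime_pow {B : Type*} [CommRing B] [IsDomain B] (φ : R →+* B)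
    {π P Q p q a b r : R} {m : ℕ} (hπ : Prime π) (hbezout : a * P + b * Q = π ^ m * r)
    (hr : φ r ≠ 0) (hfrac : p * Q = q * P) (hQ : φ Q = 0) (hπQ : ¬ π ∣ Q) : φ q = 0 := by
  -- Eliminating `P` shows `Q ∣ π ^ m * r * q`, hence `Q ∣ r * q` as `π` does not divide `Q`.
  have hQ_mul : Q * (a * p + b * q) = π ^ m * (r * q) := by
    linear_combination q * hbezout + a * hfrac
  obtain ⟨c, hc⟩ := hπ.pow_dvd_of_dvd_mul_left m hπQ (Dvd.intro _ hQ_mul.symm)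
  rw [hc, mul_left_comm] at hQ_mul
  have hrq := congrArg φ (mul_left_cancel₀ (pow_ne_zero m hπ.ne_zero) hQ_mul)
  rw [map_mul, map_mul, hQ, zero_mul, eq_comm, mul_eq_zero] at hrq
  exact hrq.resolve_left hr

end Bezout

section Substitution

variable {ι R : Type*} [CommRing R]

/-- The polynomial `P (y + t w)` in the variable `t`, with coefficients polynomials in `y`. -/
noncomputable def shiftAlong (w : ι → R) : MvPolynomial ι R →ₐ[R] (MvPolynomial ι R)[X] :=
  aeval fun i => Polynomial.C (X i) + Polynomial.C (C (w i)) * Polynomial.X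

/-- The restriction `P (x + t v)` of `P` to a parametrised line. -/
noncomputable def restrictLine (x v : ι → R) : MvPolynomial ι R →ₐ[R] R[X] :=
  aeval fun i => Polynomial.C (x i) + Polynomial.C (v i) * Polynomial.X

/-- The restriction `P (x + s v + t w)` of `P` to a parametrised plane, where `s` and `t` are the
variables of index `0` and `1`. -/
noncomputable def restrictPlane (x v w : ι → R) : MvPolynomial ι R →ₐ[R] MvPolynomial (Fin 2) R :=
  aeval fun i => C (x i) + C (v i) * X 0 + C (w i) * X 1

theorem eval_restrictLine (x v : ι → R) (P : MvPolynomial ι R) (t : R) :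
    (restrictLine x v P).eval t = eval (x + t • v) P := by
  change Polynomial.aeval t (aeval _ P) = aeval _ P
  rw [comp_aeval_apply]
  congr 2
  funext i
  simp [mul_comm (v i)]

theorem eval_restrictPlane (x v w : ι → R) (P : MvPolynomial ι R) (s t : R) :
    eval ![s, t] (restrictPlane x v w P) = eval (x + s • v + t • w) P := by
  change aeval ![s, t] (aeval _ P) = aeval _ P
  rw [comp_aeval_apply]
  congr 2
  funext i
  simp [mul_comm]

/-- The substitution `y ↦ x + s v`, `t ↦ t`, which turns `P (y + t w)` into
`P (x + s v + t w)`. -/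
noncomputable def shiftToPlane (x v : ι → R) :
    (MvPolynomial ι R)[X] →ₐ[R] MvPolynomial (Fin 2) R :=
  Polynomial.eval₂AlgHom ((Polynomial.aeval (X 0)).comp (restrictLine x v)) (X 1)
    fun _ => Commute.all _ _

theorem shiftToPlane_shiftAlong (x v w : ι → R) (P : MvPolynomial ι R) :
    shiftToPlane x v (shiftAlong w P) = restrictPlane x v w P := by
  rw [shiftAlong, comp_aeval_apply, restrictPlane]
  congr 2
  funext i
  simp [shiftToPlane, restrictLine]

theorem eval_eval_shiftAlong (w z : ι → R) (P : MvPolynomial ι R) (t : R) :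
    eval z ((shiftAlong w P).eval (C t)) = eval (z + t • w) P := by
  change ((aeval z).comp ((Polynomial.aeval (C t)).restrictScalars R)) (aeval _ P) = aeval _ P
  rw [comp_aeval_apply]
  congr 2
  funext i
  simp [mul_comm (w i)]

/-- The substitution `y ↦ y - t w`, `t ↦ t`, an automorphism which turns `P (y + t w)` back into
`P (y)`. -/
noncomputable def shear (w : ι → R) : (MvPolynomial ι R)[X] →ₐ[R] (MvPolynomial ι R)[X] :=
  Polynomial.eval₂AlgHom (shiftAlong (-w)) Polynomial.X fun _ => Commute.all _ _

theorem shear_C (w : ι → R) (P : MvPolynomial ι R) :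
    shear w (Polynomial.C P) = shiftAlong (-w) P :=
  Polynomial.eval₂_C _ _

theorem shear_X (w : ι → R) : shear w Polynomial.X = Polynomial.X :=
  Polynomial.eval₂_X _ _

theorem shiftAlong_X (w : ι → R) (i : ι) :
    shiftAlong w (X i) = Polynomial.C (X i) + Polynomial.C (C (w i)) * Polynomial.X :=
  aeval_X _ _

theorem shiftAlong_C (w : ι → R) (c : R) : shiftAlong w (C c) = Polynomial.C (C c) :=
  aeval_C _ _

theorem shear_shiftAlong (w : ι → R) (P : MvPolynomial ι R) :
    shear w (shiftAlong w P) = Polynomial.C P := by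
  suffices (shear w).comp (shiftAlong w) = Polynomial.CAlgHom from DFunLike.congr_fun this P
  refine algHom_ext fun i => ?_
  simp only [AlgHom.comp_apply, shiftAlong_X, map_add, map_mul, shear_C, shear_X, shiftAlong_C,
    Polynomial.CAlgHom_apply, Pi.neg_apply, map_neg]
  ring

theorem shear_neg_shear (w : ι → R) (D : (MvPolynomial ι R)[X]) : shear (-w) (shear w D) = D := by
  suffices (shear (-w)).comp (shear w) = AlgHom.id R _ from DFunLike.congr_fun this D
  refine Polynomial.algHom_ext' (AlgHom.ext fun P => ?_) ?_
  · simpa only [AlgHom.comp_apply, Polynomial.CAlgHom_apply, shear_C, AlgHom.id_apply]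
      using shear_shiftAlong (-w) P
  · simp only [AlgHom.comp_apply, shear_X, AlgHom.id_apply]

theorem isRelPrime_shiftAlong [IsDomain R] (w : ι → R) {P Q : MvPolynomial ι R}
    (hPQ : IsRelPrime P Q) (hQ : Q ≠ 0) : IsRelPrime (shiftAlong w P) (shiftAlong w Q) := by
  have : IsLocalHom (shear w) := ⟨fun D hD => by simpa [shear_neg_shear] using hD.map (shear (-w))⟩
  refine IsRelPrime.of_map (shear w) ?_
  simpa only [shear_shiftAlong] using isRelPrime_polynomial_C hPQ hQ

theorem exists_mul_shiftAlong_add_mul_shiftAlong_eq_C [IsDomain R] [UniqueFactorizationMonoid R]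
    (w : ι → R) {P Q : MvPolynomial ι R} (hPQ : IsRelPrime P Q) (hQ : Q ≠ 0) :
    ∃ (A B : (MvPolynomial ι R)[X]) (ρ : MvPolynomial ι R), ρ ≠ 0 ∧
      A * shiftAlong w P + B * shiftAlong w Q = Polynomial.C ρ :=
  exists_mul_add_mul_eq_C (isRelPrime_shiftAlong w hPQ hQ)

theorem eval_eq_zero_of_bezout_shiftAlong {w z : ι → R} {P Q ρ : MvPolynomial ι R}
    {A B : (MvPolynomial ι R)[X]}
    (hbezout : A * shiftAlong w P + B * shiftAlong w Q = Polynomial.C ρ) {t : R}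
    (hP : eval (z + t • w) P = 0) (hQ : eval (z + t • w) Q = 0) : eval z ρ = 0 := by
  have h := congrArg (fun D => eval z (Polynomial.eval (C t) D)) hbezout
  simpa [eval_eval_shiftAlong, hP, hQ] using h.symm

theorem eval_eq_zero_of_bezout_plane [IsDomain R] {p q P Q a b : MvPolynomial (Fin 2) R} {r : R[X]}
    (hr : r ≠ 0) (hbezout : a * P + b * Q = Polynomial.aeval (X 0) r) (hfrac : p * Q = q * P)
    (hQ : eval ![0, 0] Q = 0) (hQ1 : eval ![0, 1] Q ≠ 0) : eval ![0, 0] q = 0 := by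
  obtain ⟨r₀, hr_eq, hr₀⟩ := r.exists_eq_pow_rootMultiplicity_mul_and_not_dvd hr 0
  rw [Polynomial.C_0, sub_zero] at hr_eq hr₀
  have heval : eval ![0, 0] (Polynomial.aeval (X 0 : MvPolynomial (Fin 2) R) r₀) = r₀.eval 0 := by
    change aeval (R := R) ![0, 0] _ = _
    rw [← Polynomial.aeval_algHom_apply]
    simp
  refine map_eq_zero_of_bezout_prime_pow (eval ![0, 0]) (X_prime (i := 0))
    (m := r.rootMultiplicity 0) (r := Polynomial.aeval (X 0) r₀) (hbezout.trans ?_) ?_ hfrac hQ ?_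
  · conv_lhs => rw [hr_eq]
    simp
  · rwa [heval, ← Polynomial.coeff_zero_eq_eval_zero, ne_eq, ← Polynomial.X_dvd_iff]
  · rintro ⟨g, rfl⟩
    simp at hQ1

theorem eval_eq_zero_of_bezout_shiftAlong_of_restrictPlane [IsDomain R] {x v w : ι → R}
    {P Q ρ : MvPolynomial ι R} {A B : (MvPolynomial ι R)[X]} {p q : MvPolynomial (Fin 2) R}
    (hbezout : A * shiftAlong w P + B * shiftAlong w Q = Polynomial.C ρ)
    (hρ : eval (x + v) ρ ≠ 0) (hQ : eval x Q = 0) (hQw : eval (x + w) Q ≠ 0)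
    (hfrac : p * restrictPlane x v w Q = q * restrictPlane x v w P) : eval ![0, 0] q = 0 := by
  have hρ_line : restrictLine x v ρ ≠ 0 := by
    intro h
    apply hρ
    simpa [h, eq_comm] using eval_restrictLine x v ρ 1
  refine eval_eq_zero_of_bezout_plane hρ_line (a := shiftToPlane x v A)
    (b := shiftToPlane x v B) ?_ hfrac ?_ ?_
  · rw [← shiftToPlane_shiftAlong, ← shiftToPlane_shiftAlong, ← map_mul, ← map_mul, ← map_add,
      hbezout]
    exact Polynomial.eval₂_C _ _
  · simpa [eval_restrictPlane] using hQ
  · simpa [eval_restrictPlane] using hQw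

end Substitution

section Specialization

theorem exists_det_submatrix_ne_zero {ι κ F : Type*} [Field F] [Fintype κ] [DecidableEq κ]
    (A : Matrix ι κ F) (hA : ∀ c, A.mulVec c = 0 → c = 0) :
    ∃ g : κ → ι, (A.submatrix g id).det ≠ 0 := by
  have hspan : Submodule.span F (Set.range A) = ⊤ := by
    by_contra hlt
    obtain ⟨φ, hφ, hker⟩ := Submodule.exists_le_ker_of_lt_top _ (lt_top_iff_ne_top.2 hlt)
    have hφ_eq (r : κ → F) : φ r = r ⬝ᵥ fun j => φ fun i => if j = i then 1 else 0 :=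
      φ.pi_apply_eq_sum_univ r
    have hφ_zero := hA _ (funext fun i =>
      (hφ_eq (A i)).symm.trans (hker (Submodule.subset_span ⟨i, rfl⟩)))
    exact hφ (LinearMap.ext fun r => by simp [hφ_eq r, hφ_zero])
  obtain ⟨s, a, -, hspan_a, hindep⟩ := exists_linearIndependent' F A
  let e := (Pi.basisFun F κ).indexEquiv
    (Module.Basis.mk hindep (by rw [hspan_a, hspan]))
  refine ⟨a ∘ e, IsUnit.ne_zero ((Matrix.isUnit_iff_isUnit_det _).1
    (Matrix.linearIndependent_rows_iff_isUnit.1 ?_))⟩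
  exact hindep.comp e e.injective

theorem eq_zero_of_map_fractionRing_mulVec_eq_zero {ι κ R : Type*} [CommRing R] [IsDomain R]
    [Fintype κ] {A : Matrix ι κ R} (hA : ∀ c, A.mulVec c = 0 → c = 0) {c : κ → FractionRing R}
    (hc : (A.map (algebraMap R (FractionRing R))).mulVec c = 0) : c = 0 := by
  obtain ⟨b, hb⟩ := IsLocalization.exist_integer_multiples_of_finite (nonZeroDivisors R) c
  choose d hd using hb
  have hd_zero : d = 0 := by
    refine hA d (funext fun i => IsFractionRing.injective R (FractionRing R) ?_)
    have hsum := congrArg ((b : R) • ·) (congrFun hc i)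
    simpa [Matrix.mulVec, dotProduct, hd, Finset.smul_sum, mul_smul_comm] using hsum
  funext j
  have hbc : (b : R) • c j = 0 := by simpa [hd_zero] using (hd j).symm
  exact (smul_eq_zero.1 hbc).resolve_left (nonZeroDivisors.ne_zero b.2)

theorem exists_mulVec_eq_zero_of_infinite_eval {ι κ R : Type*} [CommRing R] [IsDomain R]
    [Fintype κ] (A : Matrix ι κ R[X])
    (h : {y | ∃ c ≠ 0, (A.map (Polynomial.eval y)).mulVec c = 0}.Infinite) :
    ∃ c ≠ 0, A.mulVec c = 0 := by
  classical
  by_contra! hA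
  obtain ⟨g, hg⟩ := exists_det_submatrix_ne_zero (A.map (algebraMap R[X] (FractionRing R[X])))
    fun _ => eq_zero_of_map_fractionRing_mulVec_eq_zero fun c => not_imp_not.1 (hA c)
  have hdet : (A.submatrix g id).det ≠ 0 := by
    intro h0
    apply hg
    rw [Matrix.submatrix_map, ← RingHom.mapMatrix_apply, ← RingHom.map_det, h0, map_zero]
  refine hdet (Polynomial.eq_zero_of_infinite_isRoot _ (h.mono ?_))
  rintro y ⟨c, hc, hAc⟩
  change Polynomial.evalRingHom y _ = 0
  rw [RingHom.map_det]
  refine Matrix.exists_mulVec_eq_zero_iff.1 ⟨c, hc, ?_⟩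
  exact funext fun i => congrFun hAc (g i)

end Specialization

section Univariate

variable {K : Type*} [Field K]

/-- Regularity on a subset of the affine line over a field, in the sense of `IsRegularOnReal`. -/
def IsUnivariateRegularOn (I : Set K) (g : K → K) : Prop :=
  ∀ t₀ ∈ I, ∃ p q : K[X], q.eval t₀ ≠ 0 ∧
    ∀ t ∈ I, q.eval t ≠ 0 → g t = p.eval t / q.eval t

theorem IsUnivariateRegularOn.mul_eval_eq_of_ne_zero {I : Set K} {g : K → K}
    (hg : IsUnivariateRegularOn I g) (hI : I.Infinite) {a b c : K[X]} (hc : c ≠ 0)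
    (hab : ∀ t ∈ I, c.eval t ≠ 0 → g t * b.eval t = a.eval t) :
    ∀ t ∈ I, g t * b.eval t = a.eval t := by
  intro t₀ ht₀
  obtain ⟨p, q, hq, hpq⟩ := hg t₀ ht₀
  have hq_ne : q ≠ 0 := by
    rintro rfl
    simp at hq
  have hcross : c * q * (p * b - q * a) = 0 := by
    refine Polynomial.eq_zero_of_infinite_isRoot _ (hI.mono fun t ht => ?_)
    by_cases hct : c.eval t = 0
    · simp [hct]
    by_cases hqt : q.eval t = 0
    · simp [hqt]
    have hgq : p.eval t = g t * q.eval t := by rw [hpq t ht hqt, div_mul_cancel₀ _ hqt]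
    simp only [Set.mem_ofPred_eq, Polynomial.IsRoot.def, Polynomial.eval_mul,
      Polynomial.eval_sub, hgq, ← hab t ht hct]
    ring
  have hpb := congrArg (Polynomial.eval t₀)
    (sub_eq_zero.1 ((mul_eq_zero.1 hcross).resolve_left (mul_ne_zero hc hq_ne)))
  rw [Polynomial.eval_mul, Polynomial.eval_mul] at hpb
  rw [hpq t₀ ht₀ hq, div_mul_eq_mul_div, hpb, mul_div_cancel_left₀ _ hq]

theorem IsUnivariateRegularOn.exists_mul_eval_eq {I : Set K} {g : K → K}
    (hg : IsUnivariateRegularOn I g) (hI : I.Infinite) :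
    ∃ p q : K[X], q ≠ 0 ∧ ∀ t ∈ I, g t * q.eval t = p.eval t := by
  obtain ⟨t₀, ht₀⟩ := hI.nonempty
  obtain ⟨p, q, hq, hpq⟩ := hg t₀ ht₀
  have hq_ne : q ≠ 0 := by
    rintro rfl
    simp at hq
  refine ⟨p, q, hq_ne, hg.mul_eval_eq_of_ne_zero hI hq_ne fun t ht hqt => ?_⟩
  rw [hpq t ht hqt, div_mul_cancel₀ _ hqt]

end Univariate

section SeparatelyRegular

variable {K : Type*} [Field K]

/-- The polynomial with prescribed coefficients on a finite set of exponents. -/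
noncomputable def ofCoeffs {σ R : Type*} [CommSemiring R] {T : Finset (σ →₀ ℕ)} (c : T → R) :
    MvPolynomial σ R :=
  ∑ m : T, monomial m.1 (c m)

theorem coeff_ofCoeffs {σ R : Type*} [CommSemiring R] {T : Finset (σ →₀ ℕ)} (c : T → R) (m : T) :
    coeff m.1 (ofCoeffs c) = c m := by
  classical
  simp [ofCoeffs, coeff_sum, coeff_monomial]

theorem eval_ofCoeffs {σ R : Type*} [CommSemiring R] {T : Finset (σ →₀ ℕ)} (c : T → R)
    (x : σ → R) : eval x (ofCoeffs c) = ∑ m, c m * eval x (monomial m.1 1) := by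
  simp [ofCoeffs, eval_monomial]

theorem ofCoeffs_coeff {σ R : Type*} [CommSemiring R] {T : Finset (σ →₀ ℕ)}
    {p : MvPolynomial σ R} (hp : p.support ⊆ T) :
    ofCoeffs (fun m : T => coeff m.1 p) = p := by
  rw [ofCoeffs, Finset.sum_coe_sort T fun m => monomial m (coeff m p),
    ← Finset.sum_subset hp fun m _ hm => by rw [notMem_support_iff.1 hm, monomial_zero],
    support_sum_monomial_coeff]

/-- The matrix of the linear system `b s * P (z s) = a s * Q (z s)`, one equation for each `s`, in
the coefficients of two polynomials `P` and `Q` with exponents in `T`. -/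
noncomputable def crossMatrix {S σ R : Type*} [CommRing R] (T : Finset (σ →₀ ℕ)) (z : S → σ → R)
    (a b : S → R) : Matrix S (T ⊕ T) R :=
  .of fun s => Sum.elim (fun m => b s * eval (z s) (monomial m.1 1))
    fun m => -(a s * eval (z s) (monomial m.1 1))

theorem crossMatrix_mulVec {S σ R : Type*} [CommRing R] {T : Finset (σ →₀ ℕ)} (z : S → σ → R)
    (a b : S → R) (c : T ⊕ T → R) (s : S) :
    (crossMatrix T z a b).mulVec c s =
      b s * eval (z s) (ofCoeffs (c ∘ Sum.inl)) - a s * eval (z s) (ofCoeffs (c ∘ Sum.inr)) := by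
  simp only [crossMatrix, Matrix.mulVec, dotProduct, Matrix.of_apply, Fintype.sum_sum_type,
    Sum.elim_inl, Sum.elim_inr, eval_ofCoeffs, Finset.mul_sum, Function.comp_apply,
    sub_eq_add_neg, ← Finset.sum_neg_distrib]
  congr 1 <;> exact Finset.sum_congr rfl fun m _ => by ring

theorem crossMatrix_map_eval {S σ R : Type*} [CommRing R] (T : Finset (σ →₀ ℕ)) (z : S → σ → R)
    (a b : S → R[X]) (y : R) :
    (crossMatrix T (fun s => Polynomial.C ∘ z s) a b).map (Polynomial.eval y) =
      crossMatrix T z (fun s => (a s).eval y) fun s => (b s).eval y := by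
  ext s m
  rcases m with m | m <;> simp [crossMatrix, eval_monomial, Finsupp.prod, Polynomial.eval_prod]

theorem exists_mul_eval_eq_mul_eval_of_infinite {S σ R : Type*} [CommRing R] [IsDomain R]
    {T : Finset (σ →₀ ℕ)} (z : S → σ → R) (a b : S → R[X]) {Y : Set R} (hY : Y.Infinite)
    (h : ∀ y ∈ Y, ∃ p q : MvPolynomial σ R, p.support ⊆ T ∧ q.support ⊆ T ∧ q ≠ 0 ∧
      ∀ s, (b s).eval y * eval (z s) p = (a s).eval y * eval (z s) q) :
    ∃ P Q : MvPolynomial σ R[X], (P ≠ 0 ∨ Q ≠ 0) ∧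
      ∀ s, b s * eval (Polynomial.C ∘ z s) P = a s * eval (Polynomial.C ∘ z s) Q := by
  obtain ⟨c, hc, hAc⟩ := exists_mulVec_eq_zero_of_infinite_eval
      (crossMatrix T (fun s => Polynomial.C ∘ z s) a b) <| hY.mono fun y hy => by
    obtain ⟨p, q, hp, hq, hq_ne, hpq⟩ := h y hy
    refine ⟨Sum.elim (fun m => coeff m.1 p) fun m => coeff m.1 q, fun h0 => hq_ne ?_,
      funext fun s => ?_⟩
    · have hq_zero : (fun m : T => coeff m.1 q) = 0 := congrArg (· ∘ Sum.inr) h0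
      rw [← ofCoeffs_coeff hq, hq_zero]
      simp [ofCoeffs]
    · rw [crossMatrix_map_eval, crossMatrix_mulVec, Sum.elim_comp_inl, Sum.elim_comp_inr,
        ofCoeffs_coeff hp, ofCoeffs_coeff hq, hpq s, sub_self, Pi.zero_apply]
  refine ⟨ofCoeffs (c ∘ Sum.inl), ofCoeffs (c ∘ Sum.inr), ?_, fun s => ?_⟩
  · by_contra! h0
    refine hc (funext fun m => ?_)
    rcases m with m | m
    · simpa [h0.1] using (coeff_ofCoeffs (c ∘ Sum.inl) m).symm
    · simpa [h0.2] using (coeff_ofCoeffs (c ∘ Sum.inr) m).symm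
  · rw [← sub_eq_zero, ← crossMatrix_mulVec (fun s => Polynomial.C ∘ z s), hAc, Pi.zero_apply]

theorem exists_infinite_inter_preimage_of_not_countable {α β : Type*} [Countable β] {s : Set α}
    (hs : ¬ s.Countable) (g : α → β) : ∃ b, (s ∩ g ⁻¹' {b}).Infinite := by
  by_contra! hfin
  refine hs ((Set.countable_iUnion fun b => (hfin b).countable).mono fun y hy => ?_)
  exact Set.mem_iUnion.2 ⟨g y, hy, rfl⟩

theorem eq_zero_of_eval_C_comp_eq_zero {σ R : Type*} [CommRing R] [IsDomain R] {I : σ → Set R}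
    (hI : ∀ i, (I i).Infinite) {P : MvPolynomial σ R[X]}
    (hP : ∀ x ∈ Set.univ.pi I, eval (Polynomial.C ∘ x) P = 0) : P = 0 := by
  refine funext_set (fun i => Polynomial.C '' I i)
    (fun i => (hI i).image Polynomial.C_injective.injOn) fun z hz => ?_
  choose x hx hxz using fun i => hz i trivial
  rw [map_zero, ← funext hxz]
  exact hP x fun i _ => hx i

theorem exists_polynomial_coeff_mul_eval_eq {σ : Type*} [Countable σ] {Y : Set K}
    (hY : ¬ Y.Countable) {I : σ → Set K} (hI : ∀ i, (I i).Infinite) {g : K → (σ → K) → K}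
    (hrat : ∀ y ∈ Y, ∃ p q : MvPolynomial σ K, q ≠ 0 ∧
      ∀ x ∈ Set.univ.pi I, g y x * eval x q = eval x p)
    (hreg : ∀ x ∈ Set.univ.pi I, IsUnivariateRegularOn Y fun y => g y x) :
    ∃ P Q : MvPolynomial σ K[X], Q ≠ 0 ∧ ∀ x ∈ Set.univ.pi I, ∀ y ∈ Y,
      g y x * (eval (Polynomial.C ∘ x) Q).eval y = (eval (Polynomial.C ∘ x) P).eval y := by
  classical
  have hY_inf : Y.Infinite := fun hfin => hY hfin.countable
  choose! p q hq hpq using hrat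
  choose a b hb hab using fun x : Set.univ.pi I => (hreg x x.2).exists_mul_eval_eq hY_inf
  -- There are only countably many finite sets of exponents, so infinitely many `y` share one.
  obtain ⟨T, hT⟩ := exists_infinite_inter_preimage_of_not_countable hY
    fun y => (p y).support ∪ (q y).support
  obtain ⟨P, Q, hPQ_ne, hPQ⟩ :=
    exists_mul_eval_eq_mul_eval_of_infinite (T := T) Subtype.val a b hT <| by
      rintro y ⟨hy, rfl⟩
      refine ⟨p y, q y, Finset.subset_union_left, Finset.subset_union_right, hq y hy,
        fun x => ?_⟩
      rw [← hpq y hy x x.2, ← hab x y hy]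
      ring
  have hQ : Q ≠ 0 := by
    rintro rfl
    refine hPQ_ne.elim (fun hP => hP ?_) fun h => h rfl
    refine eq_zero_of_eval_C_comp_eq_zero hI fun x hx => ?_
    simpa [hb ⟨x, hx⟩] using hPQ ⟨x, hx⟩
  refine ⟨P, Q, hQ, fun x hx => ?_⟩
  refine (hreg x hx).mul_eval_eq_of_ne_zero hY_inf (hb ⟨x, hx⟩) fun y hy hby => ?_
  have hcross := congrArg (Polynomial.eval y) (hPQ ⟨x, hx⟩)
  rw [Polynomial.eval_mul, Polynomial.eval_mul, ← hab ⟨x, hx⟩ y hy] at hcross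
  exact mul_left_cancel₀ hby (by linear_combination -hcross)

/-- Polynomials in `k + 1` variables as polynomials in the last `k` variables whose coefficients
are polynomials in the first one. -/
noncomputable def headCoeffEquiv (R : Type*) [CommRing R] (k : ℕ) :
    MvPolynomial (Fin (k + 1)) R ≃ₐ[R] MvPolynomial (Fin k) R[X] :=
  (renameEquiv R (_root_.finSuccEquiv k)).trans (optionEquivRight R (Fin k))

theorem eval_eval_headCoeffEquiv {R : Type*} [CommRing R] {k : ℕ} (y : R) (x : Fin k → R)
    (F : MvPolynomial (Fin (k + 1)) R) :
    (eval (Polynomial.C ∘ x) (headCoeffEquiv R k F)).eval y =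
      eval (Fin.cons y x : Fin (k + 1) → R) F := by
  suffices (Polynomial.aeval y).comp (((aeval (Polynomial.C ∘ x)).restrictScalars R).comp
      (headCoeffEquiv R k).toAlgHom) = aeval (Fin.cons y x : Fin (k + 1) → R) from
    DFunLike.congr_fun this F
  refine algHom_ext fun i => ?_
  cases i using Fin.cases <;> simp [headCoeffEquiv]

/-- Regularity in each variable separately on the product of the sets `I i`. -/
def IsSeparatelyRegularOn {ι : Type*} [DecidableEq ι] (I : ι → Set K) (f : (ι → K) → K) : Prop :=
  ∀ x ∈ Set.univ.pi I, ∀ i, IsUnivariateRegularOn (I i) fun t => f (Function.update x i t)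

theorem cons_mem_univ_pi {α : Type*} {k : ℕ} {I : Fin (k + 1) → Set α} {y : α} (hy : y ∈ I 0)
    {x : Fin k → α} (hx : x ∈ Set.univ.pi fun i => I i.succ) :
    (Fin.cons y x : Fin (k + 1) → α) ∈ Set.univ.pi I := by
  intro j _
  cases j using Fin.cases with
  | zero => exact hy
  | succ j => exact hx j trivial

theorem IsSeparatelyRegularOn.slice {k : ℕ} {I : Fin (k + 1) → Set K} {f : (Fin (k + 1) → K) → K}
    (hf : IsSeparatelyRegularOn I f) {y : K} (hy : y ∈ I 0) :
    IsSeparatelyRegularOn (fun i => I i.succ) fun x => f (Fin.cons y x) := by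
  intro x hx i
  simpa only [Fin.cons_update] using hf _ (cons_mem_univ_pi hy hx) i.succ

theorem IsSeparatelyRegularOn.isUnivariateRegularOn_cons {k : ℕ} {I : Fin (k + 1) → Set K}
    {f : (Fin (k + 1) → K) → K} (hf : IsSeparatelyRegularOn I f) (hI : (I 0).Nonempty)
    {x : Fin k → K} (hx : x ∈ Set.univ.pi fun i => I i.succ) :
    IsUnivariateRegularOn (I 0) fun y => f (Fin.cons y x) := by
  obtain ⟨y, hy⟩ := hI
  simpa only [Fin.update_cons_zero] using hf _ (cons_mem_univ_pi hy hx) 0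

theorem IsSeparatelyRegularOn.exists_mul_eval_eq {n : ℕ} {I : Fin n → Set K}
    (hI : ∀ i, ¬ (I i).Countable) {f : (Fin n → K) → K} (hf : IsSeparatelyRegularOn I f) :
    ∃ P Q : MvPolynomial (Fin n) K, Q ≠ 0 ∧
      ∀ x ∈ Set.univ.pi I, f x * eval x Q = eval x P := by
  induction n with
  | zero =>
    refine ⟨C (f default), 1, one_ne_zero, fun x _ => ?_⟩
    simp [Subsingleton.elim x default]
  | succ k ih =>
    have hI_inf (i) : (I i).Infinite := fun hfin => hI i hfin.countable
    obtain ⟨P, Q, hQ, hPQ⟩ := exists_polynomial_coeff_mul_eval_eq (hI 0)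
      (fun i : Fin k => hI_inf i.succ) (fun y hy => ih (fun i => hI i.succ) (hf.slice hy))
      (fun x hx => hf.isUnivariateRegularOn_cons (hI_inf 0).nonempty hx)
    refine ⟨(headCoeffEquiv K k).symm P, (headCoeffEquiv K k).symm Q, by simpa using hQ,
      fun x hx => ?_⟩
    have hx_frac := hPQ (Fin.tail x) (fun i _ => hx i.succ trivial) (x 0) (hx 0 trivial)
    rw [← (headCoeffEquiv K k).apply_symm_apply P, ← (headCoeffEquiv K k).apply_symm_apply Q,
      eval_eval_headCoeffEquiv, eval_eval_headCoeffEquiv, Fin.cons_self_tail] at hx_frac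
    exact hx_frac

end SeparatelyRegular

section OpenSets

theorem eq_zero_of_eval_eq_zero_of_isOpen {ι 𝕜 : Type*} [Finite ι] [NontriviallyNormedField 𝕜]
    {V : Set (ι → 𝕜)} (hV : IsOpen V) (hne : V.Nonempty) {g : MvPolynomial ι 𝕜}
    (hg : ∀ y ∈ V, eval y g = 0) : g = 0 := by
  cases nonempty_fintype ι
  obtain ⟨x, hx⟩ := hne
  obtain ⟨r, hr, hrV⟩ := Metric.isOpen_iff.1 hV x hx
  refine funext_set (fun i => Metric.ball (x i) r)
    (fun i => infinite_of_mem_nhds (x i) (Metric.ball_mem_nhds _ hr)) fun y hy => ?_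
  rw [map_zero]
  exact hg y (hrV (by rwa [ball_pi x hr]))

theorem exists_eval_ne_zero {ι R : Type*} [CommRing R] [IsDomain R] [Infinite R]
    {g : MvPolynomial ι R} (hg : g ≠ 0) : ∃ y, eval y g ≠ 0 := by
  by_contra! h
  exact hg (MvPolynomial.funext fun y => by rw [h y, map_zero])

end OpenSets

section RegularOnPlanes

variable {n : ℕ} {U : Set (Fin n → ℝ)} {f : (Fin n → ℝ) → ℝ}

/-- Condition (b): `f` is regular on the connected components of the plane sections of `U`, in the
coordinates of each parametrisation `(s, t) ↦ a + s v + t w` of each plane. -/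
def IsRegularOnPlanes (U : Set (Fin n → ℝ)) (f : (Fin n → ℝ) → ℝ) : Prop :=
  ∀ a v w : Fin n → ℝ, LinearIndependent ℝ ![v, w] →
    ∀ s₀ t₀ : ℝ, a + s₀ • v + t₀ • w ∈ U →
      ∃ p q : MvPolynomial (Fin 2) ℝ, eval ![s₀, t₀] q ≠ 0 ∧
        ∀ s t : ℝ,
          (s, t) ∈ connectedComponentIn
            {st : ℝ × ℝ | a + st.1 • v + st.2 • w ∈ U} (s₀, t₀) →
          eval ![s, t] q ≠ 0 →
          f (a + s • v + t • w) = eval ![s, t] p / eval ![s, t] q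

/-- The analogue of `IsRegularOnPlanes` for parametrised lines, with arbitrary intervals in place
of connected components. Constant parametrisations are allowed. -/
def IsRegularOnLines (U : Set (Fin n → ℝ)) (f : (Fin n → ℝ) → ℝ) : Prop :=
  ∀ (z u : Fin n → ℝ) (I : Set ℝ), IsPreconnected I → (∀ t ∈ I, z + t • u ∈ U) →
    IsUnivariateRegularOn I fun t => f (z + t • u)

/-- `f` is represented by the fraction `P / Q` on `V`, with no condition at the zeros of `Q` other
than the vanishing of `P`. -/
def IsFractionOn (V : Set (Fin n → ℝ)) (f : (Fin n → ℝ) → ℝ) (P Q : MvPolynomial (Fin n) ℝ) :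
    Prop :=
  ∀ y ∈ V, f y * eval y Q = eval y P

theorem IsRegularOnReal.isRegularOnPlanes (hf : IsRegularOnReal n U f) :
    IsRegularOnPlanes U f := by
  intro a v w _ s₀ t₀ hmem
  obtain ⟨p, q, hq, hpq⟩ := hf _ hmem
  refine ⟨restrictPlane a v w p, restrictPlane a v w q, by rwa [eval_restrictPlane],
    fun s t hst hq_st => ?_⟩
  rw [eval_restrictPlane] at hq_st ⊢
  rw [eval_restrictPlane]
  have hmem_st : (s, t) ∈ {st : ℝ × ℝ | a + st.1 • v + st.2 • w ∈ U} :=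
    connectedComponentIn_subset _ _ hst
  exact hpq _ hmem_st hq_st

theorem IsRegularOnPlanes.isRegularOnLines (hn : 2 ≤ n) (hf : IsRegularOnPlanes U f) :
    IsRegularOnLines U f := by
  intro z u I hI hIU t₀ ht₀
  rcases eq_or_ne u 0 with rfl | hu
  · exact ⟨Polynomial.C (f z), 1, by simp, fun t _ _ => by simp⟩
  obtain ⟨w, hw⟩ := exists_linearIndependent_pair_of_one_lt_finrank (R := ℝ)
    (by rw [Module.finrank_fin_fun]; omega) hu
  obtain ⟨p, q, hq, hpq⟩ := hf z u w hw t₀ 0 (by simpa using hIU t₀ ht₀)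
  have heval (g : MvPolynomial (Fin 2) ℝ) (t : ℝ) :
      (restrictLine 0 ![1, 0] g).eval t = eval ![t, 0] g := by
    rw [eval_restrictLine]
    congr 2
    ext i
    fin_cases i <;> simp
  refine ⟨restrictLine 0 ![1, 0] p, restrictLine 0 ![1, 0] q, by rwa [heval], fun t ht hqt => ?_⟩
  have hsubset : (fun t : ℝ => (t, (0 : ℝ))) '' I ⊆
      connectedComponentIn {st : ℝ × ℝ | z + st.1 • u + st.2 • w ∈ U} (t₀, 0) := by
    refine (hI.image _ (by fun_prop)).subset_connectedComponentIn ⟨t₀, ht₀, rfl⟩ ?_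
    rintro _ ⟨t, ht, rfl⟩
    simpa using hIU t ht
  rw [heval] at hqt ⊢
  rw [heval]
  simpa using hpq t 0 (hsubset ⟨t, ht, rfl⟩) hqt

theorem IsRegularOnLines.mono {V : Set (Fin n → ℝ)} (hf : IsRegularOnLines U f) (hVU : V ⊆ U) :
    IsRegularOnLines V f :=
  fun z u I hI hIV => hf z u I hI fun t ht => hVU (hIV t ht)

theorem IsRegularOnLines.isFractionOn_of_ne_zero (hf : IsRegularOnLines U f) (hU : IsOpen U)
    {P Q g : MvPolynomial (Fin n) ℝ} (hg : g ≠ 0)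
    (hPQ : IsFractionOn {y ∈ U | eval y g ≠ 0} f P Q) : IsFractionOn U f P Q := by
  intro y hy
  obtain ⟨y', hy'⟩ := exists_eval_ne_zero hg
  have hnhds : {t : ℝ | y + t • (y' - y) ∈ U} ∈ nhds 0 :=
    (hU.preimage (by fun_prop)).mem_nhds (by simpa using hy)
  obtain ⟨ε, hε, hεU⟩ := Metric.mem_nhds_iff.1 hnhds
  have hg_line : restrictLine y (y' - y) g ≠ 0 := by
    intro h
    apply hy'
    simpa [h, eq_comm] using eval_restrictLine y (y' - y) g 1
  have hline := (hf y (y' - y) _ (convex_ball 0 ε).isPreconnected hεU).mul_eval_eq_of_ne_zero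
    (a := restrictLine y (y' - y) P) (b := restrictLine y (y' - y) Q)
    (infinite_of_mem_nhds 0 (Metric.ball_mem_nhds _ hε)) hg_line
    fun t ht hgt => by
      rw [eval_restrictLine] at hgt ⊢
      rw [eval_restrictLine]
      exact hPQ _ ⟨hεU ht, hgt⟩
  simpa only [eval_restrictLine, zero_smul, add_zero] using hline 0 (Metric.mem_ball_self hε)

theorem IsRegularOnLines.isSeparatelyRegularOn (hf : IsRegularOnLines U f) {I : Fin n → Set ℝ}
    (hI : ∀ i, IsPreconnected (I i)) (hIU : Set.univ.pi I ⊆ U) : IsSeparatelyRegularOn I f := by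
  intro x hx i
  have hline (t : ℝ) : Function.update x i t = Function.update x i 0 + t • Pi.single i 1 := by
    ext j
    rcases eq_or_ne j i with rfl | hji <;> simp [*]
  rw [show (fun t => f (Function.update x i t)) = _ from funext fun t => congrArg f (hline t)]
  refine hf _ _ _ (hI i) fun t ht => hIU ?_
  rw [← hline]
  exact Set.update_mem_pi_iff_of_mem hx |>.2 fun _ => ht

theorem IsRegularOnLines.exists_isFractionOn_ball {x : Fin n → ℝ} {r : ℝ} (hr : 0 < r)
    (hf : IsRegularOnLines (Metric.ball x r) f) :
    ∃ P Q, Q ≠ 0 ∧ IsFractionOn (Metric.ball x r) f P Q := by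
  rw [ball_pi x hr] at hf ⊢
  refine (hf.isSeparatelyRegularOn (fun i => (convex_ball _ _).isPreconnected)
    subset_rfl).exists_mul_eval_eq fun i => ?_
  rw [Real.ball_eq_Ioo, Cardinal.Real.Ioo_countable_iff]
  linarith

theorem IsRegularOnLines.isFractionOn_of_subset (hf : IsRegularOnLines U f) (hU : IsOpen U)
    {V : Set (Fin n → ℝ)} (hV : IsOpen V) (hne : V.Nonempty) (hVU : V ⊆ U)
    {P Q P' Q' : MvPolynomial (Fin n) ℝ} (hPQ : IsFractionOn V f P Q)
    (hQ' : Q' ≠ 0) (hPQ' : IsFractionOn U f P' Q') : IsFractionOn U f P Q := by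
  have hcross : P * Q' - P' * Q = 0 := by
    refine eq_zero_of_eval_eq_zero_of_isOpen hV hne fun y hy => ?_
    rw [map_sub, map_mul, map_mul, ← hPQ y hy, ← hPQ' y (hVU hy)]
    ring
  refine hf.isFractionOn_of_ne_zero hU hQ' fun y ⟨hy, hQ'y⟩ => mul_right_cancel₀ hQ'y ?_
  have hcross_y := congrArg (eval y) hcross
  rw [map_sub, map_mul, map_mul, map_zero, ← hPQ' y hy] at hcross_y
  linear_combination -hcross_y

theorem IsRegularOnLines.exists_isFractionOn (hU : IsOpen U) (hconn : IsConnected U)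
    (hf : IsRegularOnLines U f) : ∃ P Q, Q ≠ 0 ∧ IsFractionOn U f P Q := by
  obtain ⟨x₀, hx₀⟩ := hconn.nonempty
  obtain ⟨r, hr, hrU⟩ := Metric.isOpen_iff.1 hU x₀ hx₀
  obtain ⟨P, Q, hQ, hPQ⟩ := (hf.mono hrU).exists_isFractionOn_ball hr
  let E := interior {y | f y * eval y Q = eval y P}
  have hE_subset : E ⊆ {y | f y * eval y Q = eval y P} := interior_subset
  have hx₀E : x₀ ∈ E := mem_interior.2 ⟨_, hPQ, Metric.isOpen_ball, Metric.mem_ball_self hr⟩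
  refine ⟨P, Q, hQ, fun y hy => hE_subset (hconn.isPreconnected.subset_of_closure_inter_subset
    isOpen_interior ⟨x₀, hx₀, hx₀E⟩ ?_ hy)⟩
  rintro y ⟨hyE, hy⟩
  obtain ⟨δ, hδ, hδU⟩ := Metric.isOpen_iff.1 hU y hy
  have hfδ := hf.mono hδU
  obtain ⟨P', Q', hQ', hPQ'⟩ := hfδ.exists_isFractionOn_ball hδ
  have hmeet : (Metric.ball y δ ∩ E).Nonempty :=
    mem_closure_iff.1 hyE _ Metric.isOpen_ball (Metric.mem_ball_self hδ)
  have hball : IsFractionOn (Metric.ball y δ) f P Q :=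
    hfδ.isFractionOn_of_subset Metric.isOpen_ball (Metric.isOpen_ball.inter isOpen_interior) hmeet
      Set.inter_subset_left (fun z hz => hE_subset hz.2) hQ' hPQ'
  exact mem_interior.2 ⟨_, hball, Metric.isOpen_ball, Metric.mem_ball_self hδ⟩

theorem IsRegularOnLines.exists_isRelPrime_isFractionOn (hU : IsOpen U) (hconn : IsConnected U)
    (hf : IsRegularOnLines U f) : ∃ P Q, IsRelPrime P Q ∧ Q ≠ 0 ∧ IsFractionOn U f P Q := by
  obtain ⟨P, Q, hQ, hPQ⟩ := hf.exists_isFractionOn hU hconn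
  obtain ⟨P', Q', g, hrel, rfl, rfl⟩ := UniqueFactorizationMonoid.exists_reduced_factors' P Q hQ
  refine ⟨P', Q', hrel, right_ne_zero_of_mul hQ,
    hf.isFractionOn_of_ne_zero hU (left_ne_zero_of_mul hQ) fun y ⟨hy, hgy⟩ => ?_⟩
  have hPQ_y := hPQ y hy
  rw [map_mul, map_mul] at hPQ_y
  exact mul_left_cancel₀ hgy (by linear_combination hPQ_y)

theorem IsRegularOnPlanes.exists_mul_restrictPlane_eq (hf : IsRegularOnPlanes U f)
    (hU : IsOpen U) {x v w : Fin n → ℝ} (hx : x ∈ U) (hvw : LinearIndependent ℝ ![v, w])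
    {P Q : MvPolynomial (Fin n) ℝ} (hPQ : IsFractionOn U f P Q) :
    ∃ p q : MvPolynomial (Fin 2) ℝ, eval ![0, 0] q ≠ 0 ∧
      p * restrictPlane x v w Q = q * restrictPlane x v w P := by
  obtain ⟨p, q, hq, hpq⟩ := hf x v w hvw 0 0 (by simpa using hx)
  refine ⟨p, q, hq, ?_⟩
  have hq_ne : q ≠ 0 := by
    rintro rfl
    simp at hq
  let S := {st : ℝ × ℝ | x + st.1 • v + st.2 • w ∈ U}
  have hS : IsOpen S := hU.preimage (by fun_prop)
  have hcomp : IsOpen {z : Fin 2 → ℝ | (z 0, z 1) ∈ connectedComponentIn S (0, 0)} :=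
    hS.connectedComponentIn.preimage (by fun_prop)
  have hzero : q * (p * restrictPlane x v w Q - q * restrictPlane x v w P) = 0 := by
    refine eq_zero_of_eval_eq_zero_of_isOpen hcomp
      ⟨0, mem_connectedComponentIn (by simpa [S] using hx)⟩ fun z hz => ?_
    obtain ⟨s, t, rfl⟩ : ∃ s t, z = ![s, t] := ⟨z 0, z 1, by ext i; fin_cases i <;> rfl⟩
    rw [map_mul, map_sub, map_mul, map_mul, eval_restrictPlane, eval_restrictPlane]
    by_cases hqz : eval ![s, t] q = 0
    · rw [hqz, zero_mul]
    · have hmem : (s, t) ∈ S := connectedComponentIn_subset S _ hz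
      rw [← hPQ _ hmem, hpq s t hz hqz]
      field_simp
      ring
  exact sub_eq_zero.1 ((mul_eq_zero.1 hzero).resolve_left hq_ne)

theorem IsRegularOnPlanes.eval_denominator_ne_zero (hf : IsRegularOnPlanes U f) (hU : IsOpen U)
    {P Q : MvPolynomial (Fin n) ℝ} (hrel : IsRelPrime P Q) (hQ : Q ≠ 0)
    (hPQ : IsFractionOn U f P Q) {x : Fin n → ℝ} (hx : x ∈ U) : eval x Q ≠ 0 := by
  intro hQx
  have hPx : eval x P = 0 := by rw [← hPQ x hx, hQx, mul_zero]
  obtain ⟨y, hy⟩ := exists_eval_ne_zero hQ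
  obtain ⟨w, rfl⟩ : ∃ w, y = x + w := ⟨y - x, by abel⟩
  obtain ⟨A, B, ρ, hρ, hbezout⟩ := exists_mul_shiftAlong_add_mul_shiftAlong_eq_C w hrel hQ
  obtain ⟨y', hy'⟩ := exists_eval_ne_zero hρ
  obtain ⟨v, rfl⟩ : ∃ v, y' = x + v := ⟨y' - x, by abel⟩
  have hw : w ≠ 0 := by
    rintro rfl
    exact hy (by simpa using hQx)
  have hvw : LinearIndependent ℝ ![v, w] := by
    rw [LinearIndependent.pair_symm_iff, LinearIndependent.pair_iff' hw]
    rintro τ rfl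
    refine hy' (eval_eq_zero_of_bezout_shiftAlong hbezout (t := -τ) ?_ ?_) <;>
      simpa [add_assoc]
  obtain ⟨p, q, hq, hpq⟩ := hf.exists_mul_restrictPlane_eq hU hx hvw hPQ
  exact hq (eval_eq_zero_of_bezout_shiftAlong_of_restrictPlane hbezout hy' hQx hy hpq)

theorem IsRegularOnPlanes.isRegularOnReal (hn : 2 ≤ n) (hU : IsOpen U) (hconn : IsConnected U)
    (hf : IsRegularOnPlanes U f) : IsRegularOnReal n U f := by
  obtain ⟨P, Q, hrel, hQ, hPQ⟩ :=
    (hf.isRegularOnLines hn).exists_isRelPrime_isFractionOn hU hconn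
  intro x hx
  exact ⟨P, Q, hf.eval_denominator_ne_zero hU hrel hQ hPQ hx,
    fun y hy hQy => eq_div_of_mul_eq hQy (hPQ y hy)⟩

end RegularOnPlanes

/-- **Theorem 8.1.** A function on a connected open set `U ⊆ ℝⁿ`, `n ≥ 2`, is regular if
and only if its restriction to each connected component of the intersection of `U` with
any 2-dimensional affine plane is regular. -/
theorem regular_iff_regular_on_planes
    (n : ℕ) (hn : 2 ≤ n) (U : Set (Fin n → ℝ)) (hU : IsOpen U) (hne : U.Nonempty)
    (hconn : IsConnected U) (f : (Fin n → ℝ) → ℝ) :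
    IsRegularOnReal n U f ↔
      ∀ a v w : Fin n → ℝ, LinearIndependent ℝ ![v, w] →
        ∀ s₀ t₀ : ℝ, a + s₀ • v + t₀ • w ∈ U →
          ∃ p q : MvPolynomial (Fin 2) ℝ, eval ![s₀, t₀] q ≠ 0 ∧
            ∀ s t : ℝ,
              (s, t) ∈ connectedComponentIn
                {st : ℝ × ℝ | a + st.1 • v + st.2 • w ∈ U} (s₀, t₀) →
              eval ![s, t] q ≠ 0 →
              f (a + s • v + t • w) = eval ![s, t] p / eval ![s, t] q :=
  ⟨IsRegularOnReal.isRegularOnPlanes, IsRegularOnPlanes.isRegularOnReal hn hU hconn⟩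
end
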